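/- Let μ be a Borel measure on ℝ with μ({0}) = 0 and ∫_ℝ min(1,u²) μ(du) < ∞, satisfying μ((0,∞)) > 0 and ∫_{|u|≥1} e^{Cu} μ(du) < ∞ for every C ∈ ℝ, and assume conditions (T1) and (T2). Fix H ∈ (1/2, 1) and define f_H(s) = [(1−s)_+^{H−1/2} − (−s)_+^{H−1/2}] / Γ(H+1/2) and, for t > 0, f(t,s) = [(t−s)_+^{H−1/2} − (−s)_+^{H−1/2}] / Γ(H+1/2), where x_+ = max(x,0). Define Ψ_H(t,z) = ∫_ℝ ∫_ℝ (e^{−izf(t,s)u} − 1 + izf(t,s)u) μ(du) ds for z ∈ ℂ, 𝓜_k^H(ζ) = ∫_ℝ f_H(s)^k M_k(f_H(s)ζ) ds for k ≥ 0, and for y ≥ 0 let ζ_H(y) be the unique ζ ≥ 0 with 𝓜₁^H(ζ) = y; set 𝒟_H(y) = −y·ζ_H(y) + 𝓜₀^H(ζ_H(y)) and 𝒦_H(y) = 𝓜₂^H(ζ_H(y)). Then for every t > 0 the function p_t(x) := (1/2π) ∫_ℝ e^{ixz + Ψ_H(t,z)} dz is well defined, and for every t₀ > 0, p_t(x) ·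 √(2π t^{2H} 𝒦_H(x/t^{H+1/2})) · exp(−t·𝒟_H(x/t^{H+1/2})) → 1 as t + x → +∞ along (t,x) ∈ [t₀,∞) × [0,∞). -/

import Mathlib

open MeasureTheory Filter Set

/-- The exponential moment functions `M_k` of a Lévy measure `μ`. -/
noncomputable def levyM (μ : Measure ℝ) : ℕ → ℝ → ℝ
  | 0, ξ => ∫ u, (Real.exp (ξ * u) - 1 - ξ * u) ∂μ
  | 1, ξ => ∫ u, u * (Real.exp (ξ * u) - 1) ∂μ
  | (n + 2), ξ => ∫ u, u ^ (n + 2) * Real.exp (ξ * u) ∂μ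

/-- `𝓜_k(ζ) = ∫_ℝ f(s)^k M_k(f(s)ζ) ds`. -/
noncomputable def kernelM (μ : Measure ℝ) (f : ℝ → ℝ) (k : ℕ) (ξ : ℝ) : ℝ :=
  ∫ s : ℝ, (f s) ^ k * levyM μ k (f s * ξ)

/-- `Ψ(z) = ∫_ℝ ∫_ℝ (e^{−izf(s)u} − 1 + izf(s)u) μ(du) ds`. -/
noncomputable def kernelPsi (μ : Measure ℝ) (f : ℝ → ℝ) (z : ℂ) : ℂ :=
  ∫ s : ℝ, ∫ u, (Complex.exp (-(Complex.I * z * ((f s * u : ℝ) : ℂ))) - 1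
    + Complex.I * z * ((f s * u : ℝ) : ℂ)) ∂μ

/-- The normalized kernel of the fractional Lévy motion:
`f_H(s) = [(1−s)_+^{H−1/2} − (−s)_+^{H−1/2}]/Γ(H+1/2)`. -/
noncomputable def fracKernel (H : ℝ) (s : ℝ) : ℝ :=
  ((max (1 - s) 0) ^ (H - 1/2) - (max (-s) 0) ^ (H - 1/2)) / Real.Gamma (H + 1/2)

/-- The time-dependent kernel of the fractional Lévy motion:
`f(t,s) = [(t−s)_+^{H−1/2} − (−s)_+^{H−1/2}]/Γ(H+1/2)`. -/
noncomputable def fracKernelT (H : ℝ) (t s : ℝ) : ℝ :=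
  ((max (t - s) 0) ^ (H - 1/2) - (max (-s) 0) ^ (H - 1/2)) / Real.Gamma (H + 1/2)


lemma aux_cos_ub (x : ℝ) : Real.cos x ≤ 1 - x ^ 2 / 2 + x ^ 4 / 2 := by
  rcases le_or_gt |x| 1 with h | h
  · have := (abs_le.1 (Real.cos_bound h)).2
    have h4 : |x| ^ 4 = x ^ 4 := by
      rw [show (4:ℕ) = 2 * 2 from rfl, pow_mul, sq_abs, pow_mul]
    rw [h4] at this
    have : 0 ≤ x ^ 4 := by positivity
    linarith
  · have h1 : 1 ≤ x ^ 2 := by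
      rw [← sq_abs]; nlinarith
    have := Real.cos_le_one x
    nlinarith

lemma aux_cos_lb (x : ℝ) (hx : |x| ≤ 1) : x ^ 2 / 4 ≤ 1 - Real.cos x := by
  have := (abs_le.1 (Real.cos_bound hx)).2
  have h4 : |x| ^ 4 = x ^ 4 := by
    rw [show (4:ℕ) = 2 * 2 from rfl, pow_mul, sq_abs, pow_mul]
  rw [h4] at this
  have h1 : x ^ 2 ≤ 1 := by
    rw [← sq_abs]; nlinarith [abs_nonneg x]
  nlinarith [sq_nonneg x]

lemma aux_exp1 (z : ℂ) : ‖Complex.exp z - 1‖ ≤ ‖z‖ * Real.exp ‖z‖ := by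
  simpa using Complex.norm_exp_sub_sum_le_norm_mul_exp z 1

lemma aux_exp2 (z : ℂ) : ‖Complex.exp z - 1 - z‖ ≤ ‖z‖ ^ 2 * Real.exp ‖z‖ := by
  have := Complex.norm_exp_sub_sum_le_norm_mul_exp z 2
  simpa [Finset.sum_range_succ, sub_sub] using this

lemma aux_exp3 (x : ℝ) :
    ‖Complex.exp (-(Complex.I * x)) - 1 + Complex.I * x + (x:ℂ) ^ 2 / 2‖ ≤ 4 * |x| ^ 3 := by
  have hn : ‖-(Complex.I * (x:ℂ))‖ = |x| := by simp
  rcases le_or_gt |x| 1 with h | h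
  · have := Complex.norm_exp_sub_sum_le_norm_mul_exp (-(Complex.I * x)) 3
    rw [hn] at this
    have e : Complex.exp (-(Complex.I * x)) - 1 + Complex.I * x + (x:ℂ) ^ 2 / 2
      = Complex.exp (-(Complex.I * x)) -
        ∑ m ∈ Finset.range 3, (-(Complex.I * (x:ℂ))) ^ m / (m.factorial : ℂ) := by
      simp [Finset.sum_range_succ, Nat.factorial, mul_pow]
      ring
    rw [e]
    refine this.trans ?_
    have h3 : Real.exp |x| ≤ 4 := by
      have := Real.exp_le_exp.2 h
      have := Real.exp_one_lt_d9
      linarith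
    have : 0 ≤ |x| ^ 3 := by positivity
    nlinarith
  · have h1 : ‖Complex.exp (-(Complex.I * x))‖ = 1 := by
      rw [Complex.norm_exp]; simp
    have h2 : ‖Complex.exp (-(Complex.I * x)) - 1 + Complex.I * x + (x:ℂ) ^ 2 / 2‖
      ≤ 1 + 1 + |x| + |x| ^ 2 / 2 := by
      refine (norm_add_le _ _).trans (add_le_add ((norm_add_le _ _).trans (add_le_add
        ((norm_sub_le _ _).trans ?_) ?_)) ?_)
      · rw [h1]; simp
      · simp
      · simp
    refine h2.trans ?_
    have a2 : 1 ≤ |x| ^ 2 := by nlinarith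
    have a3 : |x| ^ 2 ≤ |x| ^ 3 := by
      have : |x|^3 = |x| * |x|^2 := by ring
      nlinarith
    have a4 : |x| ≤ |x| ^ 2 := by nlinarith
    linarith

lemma aux_sin (x : ℝ) (hx : 0 < x) : |Real.sin x| ≤ x * (1 - min 1 (x ^ 2) / 40) := by
  have key : ∀ y : ℝ, 0 < y → y ≤ 1 → |Real.sin y| ≤ y * (1 - y ^ 2 / 10) := by
    intro y h0 h1
    have h := (abs_le.1 (Real.sin_bound (x := y) (by rw [abs_of_pos h0]; exact h1))).2
    rw [abs_of_pos h0] at h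
    rw [abs_of_nonneg (Real.sin_nonneg_of_nonneg_of_le_pi h0.le (by linarith [Real.pi_gt_three]))]
    have : y ^ 5 ≤ y ^ 3 := pow_le_pow_of_le_one h0.le h1 (by norm_num)
    have : 0 ≤ y ^ 3 := by positivity
    nlinarith
  have hm : min 1 (x ^ 2) ≤ 1 := min_le_left _ _
  have hm2 : min 1 (x ^ 2) ≤ x ^ 2 := min_le_right _ _
  rcases le_or_gt x 1 with h | h
  · refine (key x hx h).trans ?_
    apply mul_le_mul_of_nonneg_left _ hx.le
    nlinarith [sq_nonneg x]
  · rcases le_or_gt x 2 with h2 | h2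
    · have e : Real.sin x = 2 * Real.sin (x / 2) * Real.cos (x / 2) := by
        rw [← Real.sin_two_mul]; congr 1; ring
      rw [e, abs_mul, abs_mul]
      have := key (x / 2) (by linarith) (by linarith)
      have c1 := Real.abs_cos_le_one (x / 2)
      have : |(2:ℝ)| * |Real.sin (x / 2)| * |Real.cos (x / 2)| ≤ 2 * |Real.sin (x/2)| := by
        rw [abs_two]
        have := abs_nonneg (Real.sin (x/2))
        nlinarith
      have : 2 * |Real.sin (x/2)| ≤ x * (1 - (x/2)^2/10) := by linarith
      have : x * (1 - (x/2)^2/10) ≤ x * (1 - min 1 (x ^ 2) / 40) := by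
        apply mul_le_mul_of_nonneg_left _ hx.le
        nlinarith
      linarith
    · have := Real.abs_sin_le_one x
      nlinarith

/-- Oscillation estimate: for `g` decreasing with bounded slope. -/
lemma aux_osc (g g' : ℝ → ℝ) (b C : ℝ) (hb : 0 ≤ b) (hC : 0 < C)
    (hg : ∀ s ∈ Icc 0 b, HasDerivAt g (g' s) s)
    (hg'c : ContinuousOn g' (Icc 0 b))
    (hg0 : ∀ s ∈ Icc 0 b, g' s ≤ 0) (hgC : ∀ s ∈ Icc 0 b, -g' s ≤ C)
    (d : ℝ) (hd : 0 < d) (hgd : g 0 - g b = d) (l : ℝ) :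
    d / C * (min 1 ((l * d / 2) ^ 2) / 40) ≤ ∫ s in (0:ℝ)..b, (1 - Real.cos (l * g s)) := by
  rcases eq_or_ne l 0 with rfl | hl
  · simp
  have hgc : ContinuousOn g (Icc 0 b) := fun s hs => (hg s hs).continuousAt.continuousWithinAt
  have hu : uIcc 0 b = Icc 0 b := uIcc_of_le hb
  have ftc : ∫ s in (0:ℝ)..b, (1 - Real.cos (l * g s)) * (-g' s)
      = (-(g b) + Real.sin (l * g b) / l) - (-(g 0) + Real.sin (l * g 0) / l) := by
    apply intervalIntegral.integral_eq_sub_of_hasDerivAt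
      (f := fun s => -(g s) + Real.sin (l * g s) / l)
    · intro s hs
      rw [hu] at hs
      have h1 := hg s hs
      have h2 := ((h1.const_mul l).sin).div_const l
      have h3 := h1.neg.add h2
      have e : (1 - Real.cos (l * g s)) * (-g' s)
          = -g' s + Real.cos (l * g s) * (l * g' s) / l := by
        field_simp
        ring
      rw [e]
      exact h3
    · apply ContinuousOn.intervalIntegrable
      rw [hu]
      fun_prop
  have i1 : IntervalIntegrable (fun s => 1 - Real.cos (l * g s)) volume 0 b := by
    apply ContinuousOn.intervalIntegrable
    rw [hu]
    fun_prop
  have i2 : IntervalIntegrable (fun s => (1 - Real.cos (l * g s)) * (-g' s)) volume 0 b := by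
    apply ContinuousOn.intervalIntegrable
    rw [hu]
    fun_prop
  have le1 : ∫ s in (0:ℝ)..b, (1 - Real.cos (l * g s)) * (-g' s)
      ≤ ∫ s in (0:ℝ)..b, C * (1 - Real.cos (l * g s)) := by
    apply intervalIntegral.integral_mono_on hb i2 (i1.const_mul C)
    intro s hs
    have := Real.cos_le_one (l * g s)
    have := hgC s hs
    nlinarith
  rw [ftc, intervalIntegral.integral_const_mul] at le1
  have hs : |Real.sin (l * g 0) / l - Real.sin (l * g b) / l| ≤
      d * (1 - min 1 ((l * d / 2) ^ 2) / 40) := by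
    rw [← sub_div, Real.sin_sub_sin, abs_div, abs_mul, abs_mul]
    have e : (l * g 0 - l * g b) / 2 = l * d / 2 := by rw [← hgd]; ring
    rw [e]
    have c1 := Real.abs_cos_le_one ((l * g 0 + l * g b) / 2)
    have lp : 0 < |l| := abs_pos.2 hl
    have s1 := aux_sin (|l| * d / 2) (by positivity)
    have e2 : |Real.sin (|l| * d / 2)| = |Real.sin (l * d / 2)| := by
      rcases abs_choice l with h | h <;> rw [h]
      rw [show -l * d / 2 = -(l * d / 2) by ring, Real.sin_neg, abs_neg]
    have e3 : (|l| * d / 2) ^ 2 = (l * d / 2) ^ 2 := by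
      rw [div_pow, mul_pow, sq_abs]; ring
    rw [e2, e3] at s1
    rw [div_le_iff₀ lp, abs_two]
    have := abs_nonneg (Real.sin (l * d / 2))
    nlinarith
  have := (abs_le.1 hs).2
  rw [div_mul_eq_mul_div, div_le_iff₀ hC]
  nlinarith


noncomputable def nPsi (ν : Measure ℝ) (z : ℂ) : ℂ :=
  ∫ v : ℝ, (Complex.exp (-(Complex.I * z * (v : ℂ))) - 1 + Complex.I * z * (v : ℂ)) ∂ν
noncomputable def nM0 (ν : Measure ℝ) (x : ℝ) : ℝ := ∫ v : ℝ, (Real.exp (x * v) - 1 - x * v) ∂ν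
noncomputable def nM1 (ν : Measure ℝ) (x : ℝ) : ℝ := ∫ v : ℝ, v * (Real.exp (x * v) - 1) ∂ν
noncomputable def nM2 (ν : Measure ℝ) (x : ℝ) : ℝ := ∫ v : ℝ, v ^ 2 * Real.exp (x * v) ∂ν
noncomputable def nM4 (ν : Measure ℝ) (x : ℝ) : ℝ := ∫ v : ℝ, v ^ 4 * Real.exp (x * v) ∂ν
noncomputable def nG (ν : Measure ℝ) (w x : ℝ) : ℝ :=
  ∫ v : ℝ, Real.exp (x * v) * (1 - Real.cos (w * v)) ∂ν
noncomputable def nTh (ν : Measure ℝ) (w x : ℝ) : ℂ :=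
  ∫ v : ℝ, ((Real.exp (x * v) : ℝ) : ℂ) * (Complex.exp (-(Complex.I * ((w * v : ℝ) : ℂ))) - 1
    + Complex.I * ((w * v : ℝ) : ℂ)) ∂ν

/-- exponentially integrable second moments -/
def NInt (ν : Measure ℝ) : Prop := ∀ C : ℝ, Integrable (fun v : ℝ => v ^ 2 * Real.exp (C * |v|)) ν

lemma NInt.dom {ν : Measure ℝ} (hν : NInt ν) {E : Type*} [NormedAddCommGroup E]
    {F : ℝ → E} (hF : AEStronglyMeasurable F ν)
    (K C : ℝ) (h : ∀ v, ‖F v‖ ≤ K * (v ^ 2 * Real.exp (C * |v|))) : Integrable F ν :=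
  Integrable.mono' ((hν C).const_mul K) hF (Eventually.of_forall h)

lemma aux_exp_abs (x v : ℝ) : Real.exp (x * v) ≤ Real.exp (|x| * |v|) := by
  rw [← abs_mul]; exact Real.exp_le_exp.2 (le_abs_self _)

lemma aux_sq_exp (v : ℝ) : v ^ 2 ≤ 2 * Real.exp |v| := by
  have := Real.quadratic_le_exp_of_nonneg (abs_nonneg v)
  rw [sq_abs] at this
  linarith [abs_nonneg v]

lemma aux_psi_bd (z : ℂ) (v : ℝ) :
    ‖Complex.exp (-(Complex.I * z * (v : ℂ))) - 1 + Complex.I * z * (v : ℂ)‖ ≤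
      ‖z‖ ^ 2 * (v ^ 2 * Real.exp (‖z‖ * |v|)) := by
  have := aux_exp2 (-(Complex.I * z * (v : ℂ)))
  rw [sub_neg_eq_add] at this
  refine this.trans (le_of_eq ?_)
  simp [mul_pow]
  ring

lemma NInt.i_psi {ν : Measure ℝ} (hν : NInt ν) (z : ℂ) :
    Integrable (fun v : ℝ => Complex.exp (-(Complex.I * z * (v : ℂ))) - 1
      + Complex.I * z * (v : ℂ)) ν :=
  hν.dom (by fun_prop) _ _ (aux_psi_bd z)

lemma NInt.i2 {ν : Measure ℝ} (hν : NInt ν) (x : ℝ) :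
    Integrable (fun v : ℝ => v ^ 2 * Real.exp (x * v)) ν := by
  refine hν.dom (by fun_prop) 1 |x| fun v => ?_
  rw [Real.norm_of_nonneg (by positivity), one_mul]
  exact mul_le_mul_of_nonneg_left (aux_exp_abs x v) (sq_nonneg v)

lemma NInt.i4 {ν : Measure ℝ} (hν : NInt ν) (x : ℝ) :
    Integrable (fun v : ℝ => v ^ 4 * Real.exp (x * v)) ν := by
  refine hν.dom (by fun_prop) 2 (|x| + 1) fun v => ?_
  rw [Real.norm_of_nonneg (by positivity)]
  have h1 := aux_exp_abs x v
  have h2 := aux_sq_exp v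
  have h3 : Real.exp ((|x| + 1) * |v|) = Real.exp (|x| * |v|) * Real.exp |v| := by
    rw [← Real.exp_add]; ring_nf
  rw [h3]
  calc v ^ 4 * Real.exp (x * v) = v ^ 2 * (v ^ 2 * Real.exp (x * v)) := by ring
    _ ≤ v ^ 2 * ((2 * Real.exp |v|) * Real.exp (|x| * |v|)) := by gcongr
    _ = _ := by ring

lemma NInt.i1 {ν : Measure ℝ} (hν : NInt ν) (x : ℝ) :
    Integrable (fun v : ℝ => v * (Real.exp (x * v) - 1)) ν := by
  refine hν.dom (by fun_prop) |x| |x| fun v => ?_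
  rw [norm_mul]
  have := aux_exp1 ((x * v : ℝ) : ℂ)
  rw [← Complex.ofReal_exp, ← Complex.ofReal_one, ← Complex.ofReal_sub, Complex.norm_real,
    Complex.norm_real, Real.norm_eq_abs (x * v), abs_mul] at this
  calc ‖v‖ * ‖Real.exp (x * v) - 1‖ ≤ |v| * (|x| * |v| * Real.exp (|x| * |v|)) := by
        gcongr; rfl
    _ = |x| * (|v| ^ 2 * Real.exp (|x| * |v|)) := by ring
    _ = _ := by rw [sq_abs]

lemma NInt.i0 {ν : Measure ℝ} (hν : NInt ν) (x : ℝ) :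
    Integrable (fun v : ℝ => Real.exp (x * v) - 1 - x * v) ν := by
  refine hν.dom (by fun_prop) (|x| ^ 2) |x| fun v => ?_
  have := aux_exp2 ((x * v : ℝ) : ℂ)
  rw [← Complex.ofReal_exp, ← Complex.ofReal_one, ← Complex.ofReal_sub, ← Complex.ofReal_sub,
    Complex.norm_real, Complex.norm_real, Real.norm_eq_abs (x * v), abs_mul] at this
  refine this.trans (le_of_eq ?_)
  rw [mul_pow, sq_abs v]; ring

lemma aux_th_bd (w x v : ℝ) : ‖((Real.exp (x * v) : ℝ) : ℂ) *
    (Complex.exp (-(Complex.I * ((w * v : ℝ) : ℂ))) - 1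
    + Complex.I * ((w * v : ℝ) : ℂ))‖ ≤ |w| ^ 2 * (v ^ 2 * Real.exp ((|x| + |w|) * |v|)) := by
  have := aux_psi_bd (w : ℂ) v
  rw [norm_mul, Complex.norm_real, Real.norm_of_nonneg (Real.exp_pos _).le]
  push_cast
  rw [← mul_assoc]
  have h3 : Real.exp ((|x| + |w|) * |v|) = Real.exp (|x| * |v|) * Real.exp (|w| * |v|) := by
    rw [← Real.exp_add]; ring_nf
  rw [h3]
  rw [Complex.norm_real, Real.norm_eq_abs] at this
  calc _ ≤ Real.exp (|x| * |v|) * (|w| ^ 2 * (v ^ 2 * Real.exp (|w| * |v|))) := by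
        exact mul_le_mul (aux_exp_abs x v) this (norm_nonneg _) (Real.exp_pos _).le
    _ = _ := by ring

lemma NInt.i_th {ν : Measure ℝ} (hν : NInt ν) (w x : ℝ) :
    Integrable (fun v : ℝ => ((Real.exp (x * v) : ℝ) : ℂ) *
      (Complex.exp (-(Complex.I * ((w * v : ℝ) : ℂ))) - 1 + Complex.I * ((w * v : ℝ) : ℂ))) ν :=
  hν.dom (by fun_prop) _ _ (aux_th_bd w x)

lemma NInt.i_G {ν : Measure ℝ} (hν : NInt ν) (w x : ℝ) :
    Integrable (fun v : ℝ => Real.exp (x * v) * (1 - Real.cos (w * v))) ν := by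
  refine hν.dom (by fun_prop) (w ^ 2) |x| fun v => ?_
  have h1 := Real.cos_le_one (w * v)
  have h2 := Real.one_sub_sq_div_two_le_cos (x := w * v)
  rw [Real.norm_of_nonneg (mul_nonneg (Real.exp_pos _).le (by linarith))]
  calc _ ≤ Real.exp (|x| * |v|) * ((w * v) ^ 2) := by
        exact mul_le_mul (aux_exp_abs x v) (by nlinarith [sq_nonneg (w * v)]) (by linarith)
          (Real.exp_pos _).le
    _ = _ := by ring

lemma nPsi_differentiable {ν : Measure ℝ} (hν : NInt ν) : Differentiable ℂ (nPsi ν) := by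
  intro z₀
  have h := hasDerivAt_integral_of_dominated_loc_of_deriv_le (μ := ν)
    (F := fun (z : ℂ) (v : ℝ) =>
      Complex.exp (-(Complex.I * z * (v : ℂ))) - 1 + Complex.I * z * (v : ℂ))
    (F' := fun (z : ℂ) (v : ℝ) =>
      -(Complex.I * v) * (Complex.exp (-(Complex.I * z * (v : ℂ))) - 1))
    (bound := fun v => (‖z₀‖ + 1) * (v ^ 2 * Real.exp ((‖z₀‖ + 1) * |v|)))
    (x₀ := z₀) (Metric.ball_mem_nhds z₀ one_pos)
    (Eventually.of_forall fun z => by fun_prop) (hν.i_psi z₀) (by fun_prop)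
    (Eventually.of_forall fun v z hz => ?_) ((hν _).const_mul _)
    (Eventually.of_forall fun v z hz => ?_)
  · exact h.2.differentiableAt
  · have hz' : ‖z‖ ≤ ‖z₀‖ + 1 := by
      have := norm_le_norm_add_norm_sub' z z₀
      rw [mem_ball_iff_norm] at hz
      linarith
    have := aux_exp1 (-(Complex.I * z * (v : ℂ)))
    rw [norm_mul]
    have e1 : ‖-(Complex.I * (v:ℂ))‖ = |v| := by simp
    have e2 : ‖-(Complex.I * z * (v:ℂ))‖ = ‖z‖ * |v| := by simp
    rw [e1]
    rw [e2] at this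
    calc _ ≤ |v| * (‖z‖ * |v| * Real.exp (‖z‖ * |v|)) := by gcongr
      _ ≤ |v| * ((‖z₀‖ + 1) * |v| * Real.exp ((‖z₀‖ + 1) * |v|)) := by gcongr
      _ = (‖z₀‖ + 1) * (|v| ^ 2 * Real.exp ((‖z₀‖ + 1) * |v|)) := by ring
      _ = _ := by rw [sq_abs]
  · have h1 : HasDerivAt (fun z : ℂ => Complex.I * z * (v : ℂ)) (Complex.I * v) z := by
      simpa using ((hasDerivAt_id z).const_mul Complex.I).mul_const (v : ℂ)
    have h2 := ((h1.neg.cexp).sub_const 1).add h1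
    have e : -(Complex.I * (v:ℂ)) * (Complex.exp (-(Complex.I * z * (v : ℂ))) - 1) =
        Complex.exp (-(Complex.I * z * (v : ℂ))) * -(Complex.I * ↑v) + Complex.I * ↑v := by ring
    rw [e]
    exact h2

lemma nPsi_shift {ν : Measure ℝ} (hν : NInt ν) (w x : ℝ) :
    nPsi ν ((w : ℂ) + x * Complex.I) =
      nM0 ν x - Complex.I * w * nM1 ν x + nTh ν w x := by
  unfold nPsi nM0 nM1 nTh
  have e0 := integral_complex_ofReal (μ := ν) (f := fun v : ℝ => Real.exp (x * v) - 1 - x * v)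
  have e1 := integral_complex_ofReal (μ := ν) (f := fun v : ℝ => v * (Real.exp (x * v) - 1))
  rw [← e0, ← e1, ← integral_const_mul, ← integral_sub (hν.i0 x).ofReal
    ((hν.i1 x).ofReal.const_mul _), ← integral_add _ (hν.i_th w x)]
  · congr 1
    ext v
    have : -(Complex.I * ((w : ℂ) + x * Complex.I) * (v:ℂ)) =
      ((x * v : ℝ) : ℂ) + (-(Complex.I * ((w * v : ℝ) : ℂ))) := by
      push_cast
      linear_combination (-(x : ℂ) * v) * Complex.I_sq
    rw [this, Complex.exp_add]
    push_cast
    linear_combination ((x : ℂ) * v) * Complex.I_sq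
  · exact (hν.i0 x).ofReal.sub ((hν.i1 x).ofReal.const_mul _)

lemma nTh_re {ν : Measure ℝ} (hν : NInt ν) (w x : ℝ) : (nTh ν w x).re = - nG ν w x := by
  unfold nTh nG
  have := (Complex.reCLM.integral_comp_comm (hν.i_th w x)).symm
  simp only [Complex.reCLM_apply] at this
  rw [this, ← integral_neg]
  congr 1
  ext v
  rw [Complex.re_ofReal_mul]
  have : (Complex.exp (-(Complex.I * ((w * v : ℝ) : ℂ)))).re = Real.cos (w * v) := by
    rw [Complex.exp_re]
    simp
  simp only [Complex.add_re, Complex.sub_re, this]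
  simp
  ring

lemma nTh_quad {ν : Measure ℝ} (hν : NInt ν) (w x : ℝ) (h2 : 0 < nM2 ν x) (h4 : 0 < nM4 ν x) :
    ‖nTh ν w x + nM2 ν x * (w : ℂ) ^ 2 / 2‖ ≤
      4 * |w| ^ 3 * Real.sqrt (nM2 ν x * nM4 ν x) := by
  have e0 := integral_complex_ofReal (μ := ν) (f := fun v : ℝ => v ^ 2 * Real.exp (x * v))
  set L := Real.sqrt (nM4 ν x / nM2 ν x) with hL
  have hLp : 0 < L := Real.sqrt_pos.2 (by positivity)
  have e : nTh ν w x + nM2 ν x * (w : ℂ) ^ 2 / 2 = ∫ v : ℝ, (((Real.exp (x * v) : ℝ) : ℂ) *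
      (Complex.exp (-(Complex.I * ((w * v : ℝ) : ℂ))) - 1 + Complex.I * ((w * v : ℝ) : ℂ)
        + ((w * v : ℝ) : ℂ) ^ 2 / 2)) ∂ν := by
    unfold nTh nM2
    have i2c : Integrable (fun v : ℝ => ((v ^ 2 * Real.exp (x * v) : ℝ) : ℂ) * ((w:ℂ) ^ 2 / 2)) ν :=
      (hν.i2 x).ofReal.mul_const _
    rw [← e0, mul_div_assoc, ← integral_mul_const, ← integral_add (hν.i_th w x) i2c]
    congr 1
    ext v
    push_cast
    ring
  rw [e]
  have b : ‖∫ v : ℝ, (((Real.exp (x * v) : ℝ) : ℂ) *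
      (Complex.exp (-(Complex.I * ((w * v : ℝ) : ℂ))) - 1 + Complex.I * ((w * v : ℝ) : ℂ)
        + ((w * v : ℝ) : ℂ) ^ 2 / 2)) ∂ν‖ ≤ ∫ v : ℝ, 2 * |w| ^ 3 *
        (L * (v ^ 2 * Real.exp (x * v)) + L⁻¹ * (v ^ 4 * Real.exp (x * v))) ∂ν := by
    apply norm_integral_le_of_norm_le
    · exact (((hν.i2 x).const_mul L).add ((hν.i4 x).const_mul L⁻¹)).const_mul _
    · refine Eventually.of_forall fun v => ?_
      rw [norm_mul, Complex.norm_real, Real.norm_of_nonneg (Real.exp_pos _).le]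
      have a := aux_exp3 (w * v)
      have k : 2 * |v| ^ 3 ≤ L * v ^ 2 + L⁻¹ * v ^ 4 := by
        have : L * v ^ 2 + L⁻¹ * v ^ 4 - 2 * |v| ^ 3 = L⁻¹ * (v ^ 2 * (L - |v|) ^ 2) := by
          rw [← sq_abs v, show v ^ 4 = |v| ^ 4 by
            rw [show (4:ℕ) = 2 * 2 from rfl, pow_mul, pow_mul, sq_abs]]
          field_simp
          ring
        have : 0 ≤ L⁻¹ * (v ^ 2 * (L - |v|) ^ 2) := by positivity
        linarith
      calc _ ≤ Real.exp (x * v) * (4 * |w * v| ^ 3) := by gcongr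
        _ = Real.exp (x * v) * (2 * |w| ^ 3) * (2 * |v| ^ 3) := by
            rw [abs_mul, mul_pow]; ring
        _ ≤ Real.exp (x * v) * (2 * |w| ^ 3) * (L * v ^ 2 + L⁻¹ * v ^ 4) := by gcongr
        _ = _ := by ring
  refine b.trans (le_of_eq ?_)
  rw [integral_const_mul, integral_add ((hν.i2 x).const_mul L) ((hν.i4 x).const_mul L⁻¹),
    integral_const_mul, integral_const_mul]
  change 2 * |w| ^ 3 * (L * nM2 ν x + L⁻¹ * nM4 ν x) = _
  have s1 : L * nM2 ν x = Real.sqrt (nM2 ν x * nM4 ν x) := by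
    rw [hL, ← Real.sqrt_sq h2.le, ← Real.sqrt_mul (by positivity), Real.sqrt_sq h2.le]
    congr 1
    field_simp
  have s2 : L⁻¹ * nM4 ν x = Real.sqrt (nM2 ν x * nM4 ν x) := by
    rw [hL, ← Real.sqrt_inv, ← Real.sqrt_sq h4.le, ← Real.sqrt_mul (by positivity),
      Real.sqrt_sq h4.le]
    congr 1
    field_simp
  rw [s1, s2]; ring

lemma nG_lb {ν : Measure ℝ} (hν : NInt ν) (w x : ℝ) :
    nM2 ν x * w ^ 2 / 2 - nM4 ν x * w ^ 4 / 2 ≤ nG ν w x := by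
  unfold nM2 nM4 nG
  rw [mul_div_assoc, mul_div_assoc, ← integral_mul_const, ← integral_mul_const,
    ← integral_sub ((hν.i2 x).mul_const _) ((hν.i4 x).mul_const _)]
  apply integral_mono (((hν.i2 x).mul_const _).sub ((hν.i4 x).mul_const _)) (hν.i_G w x)
  intro v
  have := aux_cos_ub (w * v)
  have e := Real.exp_pos (x * v)
  simp only
  have : Real.exp (x * v) * ((w * v) ^ 2 / 2 - (w * v) ^ 4 / 2)
    ≤ Real.exp (x * v) * (1 - Real.cos (w * v)) := by
    exact mul_le_mul_of_nonneg_left (by linarith) e.le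
  simp only [Pi.sub_apply]
  refine le_trans (le_of_eq ?_) this
  ring

lemma nM1_le {ν : Measure ℝ} (hν : NInt ν) (x Z : ℝ) (hx : x ≤ Z) :
    nM1 ν x ≤ nM1 ν Z := by
  apply integral_mono (hν.i1 x) (hν.i1 Z)
  intro v
  simp only
  rcases le_or_gt 0 v with h | h
  · gcongr
  · have : Real.exp (Z * v) ≤ Real.exp (x * v) := Real.exp_le_exp.2 (by nlinarith)
    nlinarith


lemma aux_contour (F : ℂ → ℂ) (hF : Differentiable ℂ F) (x : ℝ) (hx : 0 ≤ x) (g : ℝ → ℝ)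
    (hg : Integrable g) (hgT : Tendsto g atTop (nhds 0)) (hgB : Tendsto g atBot (nhds 0))
    (hb : ∀ w : ℝ, ∀ y ∈ Icc 0 x, ‖F ((w:ℂ) + y * Complex.I)‖ ≤ g w) :
    ∫ w : ℝ, F w = ∫ w : ℝ, F ((w : ℂ) + x * Complex.I) := by
  have hFc : Continuous F := hF.continuous
  have i0 : Integrable (fun w : ℝ => F w) := by
    refine Integrable.mono' hg (by fun_prop) (Eventually.of_forall fun w => ?_)
    simpa using hb w 0 ⟨le_rfl, hx⟩
  have i1 : Integrable (fun w : ℝ => F ((w : ℂ) + x * Complex.I)) := by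
    refine Integrable.mono' hg (by fun_prop) (Eventually.of_forall fun w => ?_)
    exact hb w x ⟨hx, le_rfl⟩
  have t0 := intervalIntegral_tendsto_integral i0 tendsto_neg_atTop_atBot tendsto_id
  have t1 := intervalIntegral_tendsto_integral i1 tendsto_neg_atTop_atBot tendsto_id
  have v : ∀ (a : ℝ → ℝ), Tendsto (fun T => g (a T)) atTop (nhds 0) →
      Tendsto (fun T : ℝ => Complex.I • ∫ y in (0:ℝ)..x, F ((a T : ℂ) + y * Complex.I)) atTop
        (nhds 0) := by
    intro a ha
    apply squeeze_zero_norm (a := fun T => g (a T) * |x - 0|)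
    · intro T
      rw [norm_smul, Complex.norm_I, one_mul]
      apply intervalIntegral.norm_integral_le_of_norm_le_const
      intro y hy
      rw [uIoc_of_le hx] at hy
      exact hb _ y ⟨hy.1.le, hy.2⟩
    · simpa using ha.mul_const |x - 0|
  have v1 := v (fun T => T) hgT
  have v2 := v (fun T => -T) (hgB.comp tendsto_neg_atTop_atBot)
  have key : ∀ T : ℝ, (∫ w in (-T)..T, F w) - (∫ w in (-T)..T, F ((w : ℂ) + x * Complex.I))
      = -(Complex.I • ∫ y in (0:ℝ)..x, F ((T : ℂ) + y * Complex.I)) +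
        Complex.I • ∫ y in (0:ℝ)..x, F (((-T : ℝ) : ℂ) + y * Complex.I) := by
    intro T
    have := Complex.integral_boundary_rect_eq_zero_of_differentiableOn F ⟨-T, 0⟩ ⟨T, x⟩
      hF.differentiableOn
    simp only [Complex.ofReal_zero, zero_mul, add_zero] at this
    linear_combination this
  have lim := (t0.sub t1)
  have lim2 : Tendsto (fun T : ℝ => (∫ w in (-T)..T, F w) -
      (∫ w in (-T)..T, F ((w : ℂ) + x * Complex.I))) atTop (nhds 0) := by
    simp_rw [key]
    simpa using v1.neg.add v2
  exact sub_eq_zero.1 (tendsto_nhds_unique lim lim2)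

lemma nTh_continuous {ν : Measure ℝ} (hν : NInt ν) (x : ℝ) : Continuous (fun w => nTh ν w x) := by
  have h := (nPsi_differentiable hν).continuous
  have e : (fun w : ℝ => nTh ν w x) = fun w : ℝ => nPsi ν ((w : ℂ) + x * Complex.I) -
      (nM0 ν x - Complex.I * w * nM1 ν x) := by
    ext w
    rw [nPsi_shift hν]; ring
  rw [e]
  fun_prop

lemma nG_continuous {ν : Measure ℝ} (hν : NInt ν) (x : ℝ) : Continuous (fun w => nG ν w x) := by
  have e : (fun w : ℝ => nG ν w x) = fun w : ℝ => -(nTh ν w x).re := by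
    ext w
    rw [nTh_re hν]; ring
  rw [e]
  have := nTh_continuous hν x
  fun_prop

lemma aux_norm_h {ν : Measure ℝ} (hν : NInt ν) (t w x : ℝ) :
    ‖Complex.exp ((t : ℂ) * nTh ν w x)‖ = Real.exp (-(t * nG ν w x)) := by
  rw [Complex.norm_exp, Complex.re_ofReal_mul, nTh_re hν]
  congr 1; ring

lemma aux_core_inner {ι : Type*} {l : Filter ι} [l.IsCountablyGenerated] {ν : Measure ℝ}
    (hν : NInt ν) (t x : ι → ℝ) (ht : ∀ᶠ i in l, 0 < t i)
    (h2 : ∀ᶠ i in l, 0 < nM2 ν (x i)) (h4 : ∀ᶠ i in l, 0 < nM4 ν (x i))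
    (hL : Tendsto (fun i => nM4 ν (x i) / (t i * nM2 ν (x i) ^ 2)) l (nhds 0)) :
    Tendsto (fun i => (Real.sqrt (t i * nM2 ν (x i)) : ℂ) *
      ∫ w in {w : ℝ | w ^ 2 ≤ nM2 ν (x i) / (2 * nM4 ν (x i))},
        Complex.exp ((t i : ℂ) * nTh ν w (x i))) l (nhds (Real.sqrt (2 * Real.pi) : ℂ)) := by
  let S : ι → Set ℝ := fun i => {w : ℝ | w ^ 2 ≤ nM2 ν (x i) / (2 * nM4 ν (x i))}
  let h : ι → ℝ → ℂ := fun i w => Complex.exp ((t i : ℂ) * nTh ν w (x i))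
  let c : ι → ℝ := fun i => Real.sqrt (t i * nM2 ν (x i))
  have hSm : ∀ i, MeasurableSet (S i) := fun i => measurableSet_le (by fun_prop) (by fun_prop)
  have hh : ∀ i, Continuous (h i) := fun i => by
    have := nTh_continuous hν (x i)
    fun_prop
  have e1 : ∀ i, (c i : ℂ) * ∫ w in S i, h i w = ∫ v : ℝ, (S i).indicator (h i) (v / c i) := by
    intro i
    rw [Measure.integral_comp_div, integral_indicator (hSm i), abs_of_nonneg (Real.sqrt_nonneg _)]
    rw [Complex.real_smul]
  change Tendsto (fun i => (c i : ℂ) * ∫ w in S i, h i w) l _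
  simp_rw [e1]
  have eg : ((Real.sqrt (2 * Real.pi) : ℝ) : ℂ) =
      ∫ v : ℝ, ((Real.exp (-(1/2) * v ^ 2) : ℝ) : ℂ) := by
    rw [integral_complex_ofReal, integral_gaussian]
    congr 2
    ring
  rw [eg]
  refine tendsto_integral_filter_of_dominated_convergence
    (fun v => Real.exp (-(1/4) * v ^ 2)) ?_ ?_ ?_ ?_
  · refine Eventually.of_forall fun i => ?_
    have : Measurable ((S i).indicator (h i)) := (hh i).measurable.indicator (hSm i)
    exact (this.comp (measurable_id.div_const (c i))).aestronglyMeasurable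
  · filter_upwards [ht, h2, h4] with i ht h2 h4
    refine Eventually.of_forall fun v => ?_
    by_cases hv : v / c i ∈ S i
    · rw [indicator_of_mem hv]
      change ‖Complex.exp _‖ ≤ _
      rw [aux_norm_h hν]
      apply Real.exp_le_exp.2
      have g := nG_lb hν (v / c i) (x i)
      have hv' : (v / c i) ^ 2 ≤ nM2 ν (x i) / (2 * nM4 ν (x i)) := hv
      have hc : c i ^ 2 = t i * nM2 ν (x i) := Real.sq_sqrt (by positivity)
      have e : t i * (nM2 ν (x i) * (v / c i) ^ 2) = v ^ 2 := by
        rw [div_pow, hc]; field_simp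
      have k : nM4 ν (x i) * (v / c i) ^ 4 ≤ nM2 ν (x i) * (v / c i) ^ 2 / 2 := by
        rw [le_div_iff₀ (by positivity)] at hv'
        nlinarith [sq_nonneg (v / c i)]
      nlinarith
    · rw [indicator_of_notMem hv]
      simp
      positivity
  · exact integrable_exp_neg_mul_sq (by norm_num)
  · refine Eventually.of_forall fun v => ?_
    have ev : ∀ᶠ i in l, v / c i ∈ S i := by
      have hz : Tendsto (fun i => 2 * v ^ 2 * (nM4 ν (x i) / (t i * nM2 ν (x i) ^ 2))) l
          (nhds 0) := by simpa using hL.const_mul (2 * v ^ 2)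
      filter_upwards [ht, h2, h4, hz.eventually (gt_mem_nhds one_pos)] with i ht h2 h4 hi
      change (v / c i) ^ 2 ≤ _
      have hc : c i ^ 2 = t i * nM2 ν (x i) := Real.sq_sqrt (by positivity)
      rw [div_pow, hc, div_le_div_iff₀ (by positivity) (by positivity)]
      rw [← mul_div_assoc, div_lt_one (by positivity)] at hi
      nlinarith
    have lim : Tendsto (fun i => (t i : ℂ) * nTh ν (v / c i) (x i)) l
        (nhds ((-(1/2) * v ^ 2 : ℝ) : ℂ)) := by
      rw [tendsto_iff_norm_sub_tendsto_zero]
      have hz : Tendsto (fun i => 4 * |v| ^ 3 *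
          Real.sqrt (nM4 ν (x i) / (t i * nM2 ν (x i) ^ 2))) l (nhds 0) := by
        simpa using (hL.sqrt).const_mul (4 * |v| ^ 3)
      refine squeeze_zero' (Eventually.of_forall fun i => norm_nonneg _) ?_ hz
      filter_upwards [ht, h2, h4] with i ht h2 h4
      have hc : c i ^ 2 = t i * nM2 ν (x i) := Real.sq_sqrt (by positivity)
      have hcp : 0 < c i := Real.sqrt_pos.2 (by positivity)
      have q := nTh_quad hν (v / c i) (x i) h2 h4
      have e : (t i : ℂ) * nTh ν (v / c i) (x i) - ((-(1/2) * v ^ 2 : ℝ) : ℂ) =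
          (t i : ℂ) * (nTh ν (v / c i) (x i) + nM2 ν (x i) * ((v / c i : ℝ) : ℂ) ^ 2 / 2) := by
        have e : t i * (nM2 ν (x i) * (v / c i) ^ 2) = v ^ 2 := by
          rw [div_pow, hc]; field_simp
        have e' : (t i : ℂ) * (nM2 ν (x i) * ((v / c i : ℝ) : ℂ) ^ 2) = (v : ℂ) ^ 2 := by
          exact_mod_cast congrArg (fun r : ℝ => (r : ℂ)) e
        push_cast
        push_cast at e'
        linear_combination -e' / 2
      rw [e, norm_mul, Complex.norm_real, Real.norm_of_nonneg ht.le]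
      calc _ ≤ t i * (4 * |v / c i| ^ 3 * Real.sqrt (nM2 ν (x i) * nM4 ν (x i))) := by gcongr
        _ = 4 * |v| ^ 3 * (t i * Real.sqrt (nM2 ν (x i) * nM4 ν (x i)) / c i ^ 3) := by
            rw [abs_div, abs_of_pos hcp]; field_simp
        _ ≤ _ := by
            gcongr
            apply Real.le_sqrt_of_sq_le
            apply le_of_eq
            rw [div_pow, mul_pow, Real.sq_sqrt (by positivity), ← pow_mul,
              show 3 * 2 = 2 * 3 from rfl, pow_mul, hc]
            field_simp
    have lim2 := (Complex.continuous_exp.tendsto _).comp lim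
    rw [← Complex.ofReal_exp] at lim2
    refine lim2.congr' ?_
    filter_upwards [ev] with i hi
    rw [indicator_of_mem hi]
    rfl

lemma aux_core {ι : Type*} {l : Filter ι} [l.IsCountablyGenerated] {ν : Measure ℝ}
    (hν : NInt ν) (t x : ι → ℝ) (ht : ∀ᶠ i in l, 0 < t i)
    (h2 : ∀ᶠ i in l, 0 < nM2 ν (x i)) (h4 : ∀ᶠ i in l, 0 < nM4 ν (x i))
    (hL : Tendsto (fun i => nM4 ν (x i) / (t i * nM2 ν (x i) ^ 2)) l (nhds 0))
    (hint : ∀ᶠ i in l, Integrable (fun w => Complex.exp ((t i : ℂ) * nTh ν w (x i))))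
    (htail : Tendsto (fun i => Real.sqrt (t i * nM2 ν (x i)) *
      ∫ w in {w : ℝ | w ^ 2 ≤ nM2 ν (x i) / (2 * nM4 ν (x i))}ᶜ,
        Real.exp (-(t i * nG ν w (x i)))) l (nhds 0)) :
    Tendsto (fun i => (Real.sqrt (t i * nM2 ν (x i)) : ℂ) *
      ∫ w, Complex.exp ((t i : ℂ) * nTh ν w (x i))) l (nhds (Real.sqrt (2 * Real.pi) : ℂ)) := by
  have a := aux_core_inner hν t x ht h2 h4 hL
  have b : Tendsto (fun i => (Real.sqrt (t i * nM2 ν (x i)) : ℂ) *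
      ∫ w in {w : ℝ | w ^ 2 ≤ nM2 ν (x i) / (2 * nM4 ν (x i))}ᶜ,
        Complex.exp ((t i : ℂ) * nTh ν w (x i))) l (nhds 0) := by
    refine squeeze_zero_norm (fun i => ?_) htail
    rw [norm_mul, Complex.norm_real, Real.norm_of_nonneg (Real.sqrt_nonneg _)]
    gcongr
    refine (norm_integral_le_integral_norm _).trans (le_of_eq ?_)
    simp_rw [aux_norm_h hν]
  have := a.add b
  rw [add_zero] at this
  refine this.congr' ?_
  filter_upwards [hint] with i hi
  rw [← mul_add, integral_add_compl (measurableSet_le (by fun_prop) (by fun_prop)) hi]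

lemma aux_integrable_exp_rpow (c β : ℝ) (hc : 0 < c) (hβ : 0 < β) :
    Integrable (fun w : ℝ => Real.exp (-(c * |w| ^ β))) := by
  have h := integrableOn_rpow_mul_exp_neg_mul_rpow (p := β) (s := 0) (b := c) (by norm_num) hβ hc
  have h' : IntegrableOn (fun w : ℝ => Real.exp (-(c * |w| ^ β))) (Ioi 0) := by
    refine h.congr_fun (fun w hw => ?_) measurableSet_Ioi
    simp only [Real.rpow_zero, one_mul]
    rw [abs_of_pos hw, neg_mul]
  rw [← integrableOn_univ, ← @Iio_union_Ici _ _ (0 : ℝ), integrableOn_union,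
    integrableOn_Ici_iff_integrableOn_Ioi]
  refine ⟨?_, h'⟩
  have := h'.comp_neg
  simpa using this

lemma aux_tendsto_exp_rpow (c β : ℝ) (hc : 0 < c) (hβ : 0 < β) :
    Tendsto (fun w : ℝ => Real.exp (-(c * |w| ^ β))) atTop (nhds 0) ∧
    Tendsto (fun w : ℝ => Real.exp (-(c * |w| ^ β))) atBot (nhds 0) := by
  have h : Tendsto (fun w : ℝ => Real.exp (-(c * w ^ β))) atTop (nhds 0) :=
    Real.tendsto_exp_neg_atTop_nhds_zero.comp ((tendsto_rpow_atTop hβ).const_mul_atTop hc)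
  exact ⟨h.comp tendsto_abs_atTop_atTop, h.comp tendsto_abs_atBot_atTop⟩


structure NGood (ν : Measure ℝ) (c1 c2 c3 β m : ℝ) : Prop where
  int : NInt ν
  c1p : 0 < c1
  c2p : 0 < c2
  c3p : 0 < c3
  βp : 0 < β
  mp : 0 < m
  g1 : ∀ x w : ℝ, 0 ≤ x → c1 * Real.exp (c2 * x) * min 1 (w ^ 2) ≤ nG ν w x
  g2 : ∀ x w : ℝ, 0 ≤ x → 1 ≤ |w| → c3 * |w| ^ β ≤ nG ν w x
  lim : Tendsto (fun x => nM4 ν x / nM2 ν x ^ 2) atTop (nhds 0)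
  gr : ∀ ε > 0, ∃ C > 0, ∀ x : ℝ, 0 ≤ x → nM4 ν x ≤ C * Real.exp (ε * x) * nM2 ν x ∧
    nM2 ν x ≤ C * Real.exp (C * Real.exp (ε * x))
  m2 : ∀ x : ℝ, 0 ≤ x → m ≤ nM2 ν x
  m4 : ∀ x : ℝ, 0 ≤ x → 0 < nM4 ν x

lemma nG_nonneg (ν : Measure ℝ) (w x : ℝ) : 0 ≤ nG ν w x :=
  integral_nonneg fun v => mul_nonneg (Real.exp_pos _).le (by
    have := Real.cos_le_one (w * v)
    linarith)

section
variable {ν : Measure ℝ} {c1 c2 c3 β m : ℝ}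

lemma NGood.g3 (h : NGood ν c1 c2 c3 β m) (x w : ℝ) (hx : 0 ≤ x) :
    c3 * (|w| ^ β - 1) ≤ nG ν w x := by
  have := h.c3p
  rcases le_or_gt 1 |w| with hw | hw
  · have := h.g2 x w hx hw
    linarith
  · have h1 : |w| ^ β ≤ 1 := Real.rpow_le_one (abs_nonneg _) hw.le h.βp.le
    have := nG_nonneg ν w x
    nlinarith

lemma NGood.exp_bd (h : NGood ν c1 c2 c3 β m) (t x w : ℝ) (ht : 0 < t) (hx : 0 ≤ x) :
    Real.exp (-(t * nG ν w x)) ≤ Real.exp (t * c3) * Real.exp (-(t * c3 * |w| ^ β)) := by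
  rw [← Real.exp_add]
  apply Real.exp_le_exp.2
  have := mul_le_mul_of_nonneg_left (h.g3 x w hx) ht.le
  linarith

lemma NGood.h_int (h : NGood ν c1 c2 c3 β m) (t x : ℝ) (ht : 0 < t) (hx : 0 ≤ x) :
    Integrable (fun w => Complex.exp ((t : ℂ) * nTh ν w x)) := by
  have := nTh_continuous h.int x
  refine Integrable.mono' ((aux_integrable_exp_rpow (t * c3) β (mul_pos ht h.c3p) h.βp).const_mul
    (Real.exp (t * c3))) (by fun_prop) (Eventually.of_forall fun w => ?_)
  rw [aux_norm_h h.int]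
  exact h.exp_bd t x w ht hx

lemma NGood.contour (h : NGood ν c1 c2 c3 β m) (t x : ℝ) (ht : 0 < t) (hx : 0 ≤ x) :
    ∫ w : ℝ, Complex.exp ((t : ℂ) * (Complex.I * nM1 ν x * w + nPsi ν w)) =
      Real.exp (t * (-(nM1 ν x * x) + nM0 ν x)) * ∫ w : ℝ, Complex.exp ((t : ℂ) * nTh ν w x) := by
  have hd := nPsi_differentiable h.int
  have tc : 0 < t * c3 := mul_pos ht h.c3p
  set y := nM1 ν x
  have B0 : ∀ η ∈ Icc 0 x, nM0 ν η ≤ ∫ v : ℝ, x ^ 2 * (v ^ 2 * Real.exp (x * |v|)) ∂ν := by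
    intro η hη
    refine integral_mono (h.int.i0 η) ((h.int x).const_mul _) fun v => ?_
    have := aux_exp2 ((η * v : ℝ) : ℂ)
    rw [← Complex.ofReal_exp, ← Complex.ofReal_one, ← Complex.ofReal_sub, ← Complex.ofReal_sub,
      Complex.norm_real, Complex.norm_real, Real.norm_eq_abs (η * v), abs_mul,
      abs_of_nonneg hη.1] at this
    refine (le_abs_self _).trans (this.trans ?_)
    have h1 := hη.2
    have h0 := hη.1
    calc (η * |v|) ^ 2 * Real.exp (η * |v|) ≤ (x * |v|) ^ 2 * Real.exp (x * |v|) := by gcongr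
      _ = _ := by rw [mul_pow, sq_abs]; ring
  set B := ∫ v : ℝ, x ^ 2 * (v ^ 2 * Real.exp (x * |v|)) ∂ν
  have split : ∀ w η : ℝ, (t : ℂ) * (Complex.I * y * ((w : ℂ) + η * Complex.I) +
      nPsi ν ((w : ℂ) + η * Complex.I)) =
      ((t * (-(y * η) + nM0 ν η) : ℝ) : ℂ) + (t : ℂ) * (Complex.I * (y - nM1 ν η) * w)
        + t * nTh ν w η := by
    intro w η
    rw [nPsi_shift h.int]
    push_cast
    linear_combination (t * y * η : ℂ) * Complex.I_sq
  have c := aux_contour (fun z : ℂ => Complex.exp ((t : ℂ) * (Complex.I * y * z + nPsi ν z)))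
    (by fun_prop) x hx
    (fun w => (Real.exp (t * (|y| * x + B)) * Real.exp (t * c3)) *
      Real.exp (-(t * c3 * |w| ^ β)))
    ((aux_integrable_exp_rpow (t * c3) β tc h.βp).const_mul _)
    (by
      have := (aux_tendsto_exp_rpow (t * c3) β tc h.βp).1.const_mul
        (Real.exp (t * (|y| * x + B)) * Real.exp (t * c3))
      rwa [mul_zero] at this)
    (by
      have := (aux_tendsto_exp_rpow (t * c3) β tc h.βp).2.const_mul
        (Real.exp (t * (|y| * x + B)) * Real.exp (t * c3))
      rwa [mul_zero] at this)
    (by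
      intro w η hη
      rw [split, Complex.exp_add, Complex.exp_add, norm_mul, norm_mul, aux_norm_h h.int,
        ← Complex.ofReal_exp, Complex.norm_real, Real.norm_of_nonneg (Real.exp_pos _).le]
      have n1 : ‖Complex.exp ((t : ℂ) * (Complex.I * (y - nM1 ν η) * w))‖ = 1 := by
        rw [Complex.norm_exp]
        simp
      rw [n1, mul_one, mul_assoc]
      have e1 : -(y * η) + nM0 ν η ≤ |y| * x + B := by
        have a := B0 η hη
        have b : -(y * η) ≤ |y| * x := by
          have := neg_abs_le y
          have := abs_nonneg y
          have := hη.1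
          have := hη.2
          nlinarith
        linarith
      have e2 := h.exp_bd t η w ht hη.1
      gcongr)
  rw [c, ← integral_const_mul]
  congr 1
  ext w
  rw [split, Complex.exp_add, Complex.exp_add]
  simp [y]

lemma aux_fin (κ C E t x t0 ε : ℝ) (κp : 0 < κ) (Cp : 0 < C) (ht0 : 0 < t0) (ht : t0 ≤ t)
    (hx : 0 ≤ x) (εp : 0 < ε) (E1 : 1 + ε * x ≤ E) :
    κ * t / 2 + C * E - κ * t * E ^ 3 ≤ C * (1 + C / (κ * t0 / 4)) -
      κ / 4 * (min 1 (t0 * ε) / 2) * (t + x) := by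
  have tp : 0 < t := ht0.trans_le ht
  have E1' : 1 ≤ E := by nlinarith [mul_nonneg εp.le hx]
  have ap : 0 < κ * t0 / 4 := by positivity
  have E3 : 1 ≤ E ^ 3 := one_le_pow₀ E1'
  have EE : E ≤ E ^ 3 := by
    have : E ^ 3 = E * E ^ 2 := by ring
    have : 1 ≤ E ^ 2 := one_le_pow₀ E1'
    nlinarith
  have f1 : C * E ≤ (κ * t0 / 4) * E ^ 3 + (C * (1 + C / (κ * t0 / 4))) := by
    rcases le_total (C / (κ * t0 / 4)) (E ^ 2) with h1 | h1
    · rw [div_le_iff₀ ap] at h1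
      have : C * E ≤ (κ * t0 / 4) * E ^ 3 := by nlinarith
      have : 0 ≤ (C * (1 + C / (κ * t0 / 4))) := by positivity
      linarith
    · have : E ≤ 1 + E ^ 2 := by nlinarith
      have : C * E ≤ (C * (1 + C / (κ * t0 / 4))) := by
        gcongr; linarith
      have : 0 ≤ (κ * t0 / 4) * E ^ 3 := by positivity
      linarith
  have f2 : (κ * t0 / 4) * E ^ 3 ≤ κ / 4 * (t * E ^ 3) := by
    have : t0 * E ^ 3 ≤ t * E ^ 3 := by gcongr
    nlinarith
  have f3 : t ≤ t * E ^ 3 := by nlinarith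
  have f4 : (κ / 4 * (min 1 (t0 * ε) / 2)) * (t + x) ≤ κ / 4 * (t * E ^ 3) := by
    rw [mul_assoc]
    refine mul_le_mul_of_nonneg_left ?_ (by positivity)
    have z1 : min 1 (t0 * ε) * t ≤ 1 * t := by gcongr; exact min_le_left _ _
    have z2 : min 1 (t0 * ε) * x ≤ t0 * ε * x := by gcongr; exact min_le_right _ _
    have z3 : t0 * ε * x ≤ t * E := by
      have : t0 * (ε * x) ≤ t * E := by
        apply mul_le_mul ht (by linarith) (by positivity) tp.le
      linarith
    have z4 : t ≤ t * E := by nlinarith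
    have z5 : t * E ≤ t * E ^ 3 := by gcongr
    nlinarith
  nlinarith

set_option maxHeartbeats 1000000 in
lemma NGood.tail {ι : Type*} {l : Filter ι} (h : NGood ν c1 c2 c3 β m) (t x : ι → ℝ)
    (t0 : ℝ) (ht0 : 0 < t0)
    (ht : ∀ᶠ i in l, t0 ≤ t i) (hx : ∀ᶠ i in l, 0 ≤ x i)
    (hinf : Tendsto (fun i => t i + x i) l atTop) :
    Tendsto (fun i => Real.sqrt (t i * nM2 ν (x i)) *
      ∫ w in {w : ℝ | w ^ 2 ≤ nM2 ν (x i) / (2 * nM4 ν (x i))}ᶜ,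
        Real.exp (-(t i * nG ν w (x i)))) l (nhds 0) := by
  obtain ⟨c1p, c2p, c3p, βp⟩ := And.intro h.c1p (And.intro h.c2p (And.intro h.c3p h.βp))
  set ε := c2 / 4 with hε
  have εp : 0 < ε := by positivity
  obtain ⟨C, Cp, hC⟩ := h.gr ε εp
  set k := min 1 (1 / (2 * C)) with hk
  have kp : 0 < k := lt_min one_pos (by positivity)
  set κ := c1 * k / 2 with hκ
  have κp : 0 < κ := by positivity
  set a := κ * t0 / 4 with ha
  have ap : 0 < a := by positivity
  set K := ∫ w : ℝ, Real.exp (t0 * c3 / 2) * Real.exp (-(t0 * c3 / 2 * |w| ^ β)) with hK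
  have K0 : 0 ≤ K := integral_nonneg fun w => by positivity
  set C' := C * (1 + C / a) with hC'
  set q := κ / 4 * (min 1 (t0 * ε) / 2) with hq
  have qp : 0 < q := by
    have : 0 < min 1 (t0 * ε) := lt_min one_pos (by positivity)
    positivity
  have hz : Tendsto (fun i => ((1 + 2 * C / κ) * Real.exp C' * K) *
      Real.exp (-(q * (t i + x i)))) l (nhds 0) := by
    have := (Real.tendsto_exp_neg_atTop_nhds_zero.comp (hinf.const_mul_atTop qp)).const_mul
      ((1 + 2 * C / κ) * Real.exp C' * K)
    simpa using this
  refine squeeze_zero' (Eventually.of_forall fun i => ?_) ?_ hz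
  · exact mul_nonneg (Real.sqrt_nonneg _) (integral_nonneg fun w => (Real.exp_pos _).le)
  filter_upwards [ht, hx] with i ht hx
  generalize t i = t at *
  generalize x i = x at *
  obtain ⟨b1, b2⟩ := hC x hx
  have tp : 0 < t := ht0.trans_le ht
  have m2p : 0 < nM2 ν x := h.mp.trans_le (h.m2 x hx)
  have m4p := h.m4 x hx
  set E := Real.exp (ε * x) with hE
  have E1 : 1 + ε * x ≤ E := by
    have := Real.add_one_le_exp (ε * x)
    linarith
  have E1' : 1 ≤ E := by nlinarith
  have Ec : Real.exp (c2 * x) = E ^ 4 := by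
    rw [hE, ← Real.exp_nat_mul]; congr 1; rw [hε]; push_cast; ring
  have iS : ∫ w in {w : ℝ | w ^ 2 ≤ nM2 ν x / (2 * nM4 ν x)}ᶜ, Real.exp (-(t * nG ν w x)) ≤
      Real.exp (-(κ * t * E ^ 3)) * K := by
    have hi : Integrable (fun w : ℝ => Real.exp (-(κ * t * E ^ 3)) *
        (Real.exp (t0 * c3 / 2) * Real.exp (-(t0 * c3 / 2 * |w| ^ β)))) :=
      ((aux_integrable_exp_rpow (t0 * c3 / 2) β (by positivity) βp).const_mul _).const_mul _
    have hG : Integrable (fun w : ℝ => Real.exp (-(t * nG ν w x))) := by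
      have := (h.h_int t x tp hx).norm
      simpa only [aux_norm_h h.int] using this
    calc _ ≤ ∫ w in {w : ℝ | w ^ 2 ≤ nM2 ν x / (2 * nM4 ν x)}ᶜ, Real.exp (-(κ * t * E ^ 3)) *
          (Real.exp (t0 * c3 / 2) * Real.exp (-(t0 * c3 / 2 * |w| ^ β))) := by
          apply setIntegral_mono_on hG.integrableOn hi.integrableOn
          · exact (measurableSet_le (by fun_prop) (by fun_prop)).compl
          intro w hw
          have hw' : nM2 ν x / (2 * nM4 ν x) < w ^ 2 := by simpa using hw
          rw [← Real.exp_add, ← Real.exp_add]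
          apply Real.exp_le_exp.2
          have g1 := h.g1 x w hx
          have g3 := h.g3 x w hx
          have gn := nG_nonneg ν w x
          have mw : k ≤ E * min 1 (w ^ 2) := by
            rcases le_total 1 (w ^ 2) with h1 | h1
            · rw [min_eq_left h1, mul_one]
              exact (min_le_left _ _).trans E1'
            · rw [min_eq_right h1]
              refine (min_le_right _ _).trans ?_
              have : 1 / (2 * C) ≤ E * (nM2 ν x / (2 * nM4 ν x)) := by
                rw [← mul_div_assoc, div_le_div_iff₀ (by positivity) (by positivity)]
                nlinarith
              refine this.trans ?_
              gcongr
          have p1 : c1 * k * E ^ 3 ≤ nG ν w x := by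
            refine le_trans ?_ g1
            rw [Ec]
            have : c1 * E ^ 3 * k ≤ c1 * E ^ 3 * (E * min 1 (w ^ 2)) := by gcongr
            linarith
          have p2 : κ * t * E ^ 3 ≤ t * nG ν w x / 2 := by
            have := mul_le_mul_of_nonneg_left p1 tp.le
            rw [hκ]; linarith
          have p3 : t0 * (c3 * (|w| ^ β - 1)) ≤ t * nG ν w x :=
            (mul_le_mul_of_nonneg_left g3 ht0.le).trans (mul_le_mul_of_nonneg_right ht gn)
          linarith
      _ ≤ ∫ w, Real.exp (-(κ * t * E ^ 3)) *
          (Real.exp (t0 * c3 / 2) * Real.exp (-(t0 * c3 / 2 * |w| ^ β))) :=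
          setIntegral_le_integral hi (Eventually.of_forall fun w => by positivity)
      _ = _ := by rw [integral_const_mul]
  have sq : Real.sqrt (t * nM2 ν x) ≤ (1 + 2 * C / κ) * Real.exp (κ * t / 2 + C * E) := by
    have s1 : Real.sqrt (t * nM2 ν x) ≤ 1 + t * nM2 ν x := by
      apply Real.sqrt_le_iff.2
      have : 0 < t * nM2 ν x := by positivity
      exact ⟨by positivity, by nlinarith⟩
    have s2 : t ≤ 2 / κ * Real.exp (κ * t / 2) := by
      have := Real.add_one_le_exp (κ * t / 2)
      rw [div_mul_eq_mul_div, le_div_iff₀ κp]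
      linarith
    have s3 : t * nM2 ν x ≤ 2 * C / κ * Real.exp (κ * t / 2 + C * E) := by
      calc t * nM2 ν x ≤ (2 / κ * Real.exp (κ * t / 2)) * (C * Real.exp (C * E)) := by gcongr
        _ = _ := by rw [Real.exp_add]; ring
    have s4 : 1 ≤ Real.exp (κ * t / 2 + C * E) := Real.one_le_exp (by positivity)
    linarith
  have fin : κ * t / 2 + C * E - κ * t * E ^ 3 ≤ C' - q * (t + x) :=
    aux_fin κ C E t x t0 ε κp Cp ht0 ht hx εp E1
  calc _ ≤ ((1 + 2 * C / κ) * Real.exp (κ * t / 2 + C * E)) * (Real.exp (-(κ * t * E ^ 3)) * K) := by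
        gcongr
    _ = ((1 + 2 * C / κ) * K) * Real.exp (κ * t / 2 + C * E - κ * t * E ^ 3) := by
        rw [sub_eq_add_neg, Real.exp_add (κ * t / 2 + C * E)]; ring
    _ ≤ ((1 + 2 * C / κ) * K) * Real.exp (C' - q * (t + x)) := by gcongr
    _ = _ := by rw [sub_eq_add_neg, Real.exp_add C']; ring

lemma NGood.main {ι : Type*} {l : Filter ι} [l.IsCountablyGenerated]
    (h : NGood ν c1 c2 c3 β m) (t x : ι → ℝ)
    (t0 : ℝ) (ht0 : 0 < t0)
    (ht : ∀ᶠ i in l, t0 ≤ t i) (hx : ∀ᶠ i in l, 0 ≤ x i)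
    (hinf : Tendsto (fun i => t i + x i) l atTop) :
    Tendsto (fun i => (Real.sqrt (t i * nM2 ν (x i)) : ℂ) *
      ∫ w, Complex.exp ((t i : ℂ) * nTh ν w (x i))) l (nhds (Real.sqrt (2 * Real.pi) : ℂ)) := by
  have tp : ∀ᶠ i in l, 0 < t i := ht.mono fun i hi => ht0.trans_le hi
  refine aux_core h.int t x tp (hx.mono fun i hi => h.mp.trans_le (h.m2 _ hi))
    (hx.mono fun i hi => h.m4 _ hi) ?_ ?_ (h.tail t x t0 ht0 ht hx hinf)
  · rw [Metric.tendsto_nhds]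
    intro ε εp
    have e1 := (Metric.tendsto_nhds.1 h.lim) (ε * t0) (by positivity)
    obtain ⟨Z, hZ⟩ := (eventually_atTop.1 e1)
    obtain ⟨C, Cp, hC⟩ := h.gr 1 one_pos
    have mp := h.mp
    set B := C * Real.exp Z / m with hB
    have Bp : 0 < B := by positivity
    filter_upwards [ht, hx, tp, hinf.eventually_gt_atTop (B / ε + Z)] with i ht hx tp hi
    have m2p : 0 < nM2 ν (x i) := h.mp.trans_le (h.m2 _ hx)
    have m4p := h.m4 _ hx
    rw [Real.dist_eq, sub_zero, abs_of_pos (by positivity), mul_comm, ← div_div,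
      div_lt_iff₀ tp]
    rcases le_or_gt Z (x i) with hz | hz
    · have := hZ _ hz
      rw [Real.dist_eq, sub_zero, abs_of_pos (by positivity)] at this
      exact this.trans_le (by gcongr)
    · have b := (hC _ hx).1
      have : nM4 ν (x i) / nM2 ν (x i) ^ 2 ≤ B := by
        rw [hB, div_le_div_iff₀ (by positivity) mp]
        have e : Real.exp (1 * x i) ≤ Real.exp Z := Real.exp_le_exp.2 (by linarith)
        calc nM4 ν (x i) * m ≤ (C * Real.exp Z * nM2 ν (x i)) * nM2 ν (x i) := by
              refine mul_le_mul (b.trans ?_) (h.m2 _ hx) mp.le (by positivity)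
              gcongr
          _ = _ := by ring
      have t1 : B / ε < t i := by linarith
      rw [div_lt_iff₀ εp] at t1
      linarith
  · filter_upwards [tp, hx] with i ht hx using h.h_int _ _ ht hx
end


section
variable {H : ℝ}

lemma fk_gam (hH : H ∈ Ioo (1/2 : ℝ) 1) : 0 < Real.Gamma (H + 1/2) :=
  Real.Gamma_pos_of_pos (by linarith [hH.1])

lemma fk_cont (hH : H ∈ Ioo (1/2 : ℝ) 1) : Continuous (fracKernel H) := by
  unfold fracKernel
  have : 0 ≤ H - 1/2 := by linarith [hH.1]
  refine Continuous.div_const (Continuous.sub ?_ ?_) _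
  · exact Continuous.rpow_const (by fun_prop) fun _ => Or.inr this
  · exact Continuous.rpow_const (by fun_prop) fun _ => Or.inr this

lemma fk_nonneg (hH : H ∈ Ioo (1/2 : ℝ) 1) (s : ℝ) : 0 ≤ fracKernel H s := by
  unfold fracKernel
  have : 0 ≤ H - 1/2 := by linarith [hH.1]
  refine div_nonneg (sub_nonneg.2 ?_) (fk_gam hH).le
  refine Real.rpow_le_rpow (le_max_right _ _) ?_ this
  exact max_le_max (by linarith) le_rfl

lemma fk_le (hH : H ∈ Ioo (1/2 : ℝ) 1) (s : ℝ) :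
    fracKernel H s ≤ 1 / Real.Gamma (H + 1/2) := by
  unfold fracKernel
  have h0 : 0 ≤ H - 1/2 := by linarith [hH.1]
  refine div_le_div_of_nonneg_right ?_ (fk_gam hH).le
  have h1 : max (1 - s) 0 ≤ max (-s) 0 + 1 := by
    apply max_le
    · linarith [le_max_left (-s) 0]
    · linarith [le_max_right (-s) 0]
  have h2 := Real.rpow_add_le_add_rpow (p := H - 1/2) (le_max_right (-s) 0) zero_le_one h0
    (by linarith [hH.2])
  rw [Real.one_rpow] at h2
  have h3 := Real.rpow_le_rpow (le_max_right (1 - s) 0) h1 h0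
  linarith

lemma fk_neg (r : ℝ) (hr : 0 < r) :
    fracKernel H (-r) = ((1 + r) ^ (H - 1/2) - r ^ (H - 1/2)) / Real.Gamma (H + 1/2) := by
  unfold fracKernel
  rw [max_eq_left (by linarith), max_eq_left (by linarith)]
  simp

lemma fk_ub (hH : H ∈ Ioo (1/2 : ℝ) 1) (r : ℝ) (hr : 0 < r) :
    fracKernel H (-r) ≤ 1 / Real.Gamma (H + 1/2) * ((H - 1/2) * r ^ (H - 1/2 - 1)) := by
  rw [fk_neg r hr, div_mul_eq_mul_div, one_mul]
  refine div_le_div_of_nonneg_right ?_ (fk_gam hH).le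
  have e : 1 + r = r * (1 + 1 / r) := by field_simp; ring
  have hi : 0 < 1 / r := by positivity
  have b := rpow_one_add_le_one_add_mul_self (s := 1 / r) (p := H - 1/2) (by linarith)
    (by linarith [hH.1]) (by linarith [hH.2])
  rw [e, Real.mul_rpow hr.le (by positivity), Real.rpow_sub_one hr.ne']
  have := mul_le_mul_of_nonneg_left b (Real.rpow_nonneg hr.le (H - 1/2))
  calc _ ≤ r ^ (H - 1/2) * (1 + (H - 1/2) * (1/r)) - r ^ (H - 1/2) := by linarith
    _ = _ := by ring

lemma fk_lb (hH : H ∈ Ioo (1/2 : ℝ) 1) (r : ℝ) (hr : 0 < r) :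
    1 / Real.Gamma (H + 1/2) * ((H - 1/2) * (1 + r) ^ (H - 1/2 - 1)) ≤ fracKernel H (-r) := by
  rw [fk_neg r hr, div_mul_eq_mul_div, one_mul]
  refine div_le_div_of_nonneg_right ?_ (fk_gam hH).le
  have hr1 : 0 < 1 + r := by linarith
  have e : r = (1 + r) * (1 + -(1 / (1 + r))) := by field_simp; ring
  have hi : 1 / (1 + r) ≤ 1 := by rw [div_le_one hr1]; linarith
  have b := rpow_one_add_le_one_add_mul_self (s := -(1 / (1 + r))) (p := H - 1/2) (by linarith)
    (by linarith [hH.1]) (by linarith [hH.2])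
  rw [Real.rpow_sub_one hr1.ne']
  have e2 : r ^ (H - 1/2) = (1 + r) ^ (H - 1/2) * (1 + -(1 / (1 + r))) ^ (H - 1/2) := by
    rw [← Real.mul_rpow hr1.le (by linarith), ← e]
  rw [e2]
  have := mul_le_mul_of_nonneg_left b (Real.rpow_nonneg hr1.le (H - 1/2))
  calc (H - 1/2) * ((1 + r) ^ (H - 1/2) / (1 + r))
      = (1 + r) ^ (H - 1/2) - (1 + r) ^ (H - 1/2) * (1 + (H - 1/2) * -(1/(1 + r))) := by ring
    _ ≤ _ := by linarith

lemma fk_decay (hH : H ∈ Ioo (1/2 : ℝ) 1) (s : ℝ) :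
    fracKernel H s ≤ 2 * (1 / Real.Gamma (H + 1/2)) * (1 + ‖s‖) ^ (-(3/2 - H)) := by
  have gp := fk_gam hH
  have h1 := hH.1
  have h2 := hH.2
  have key : ∀ x : ℝ, 0 < x → x ≤ 2 → (1/2 : ℝ) ≤ x ^ (-(3/2 - H)) := by
    intro x hx hx2
    calc (1/2 : ℝ) = 2 ^ (-1 : ℝ) := by rw [Real.rpow_neg_one]; norm_num
      _ ≤ 2 ^ (-(3/2 - H)) := Real.rpow_le_rpow_of_exponent_le (by norm_num) (by linarith)
      _ ≤ x ^ (-(3/2 - H)) := Real.rpow_le_rpow_of_nonpos hx hx2 (by linarith)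
  rcases le_or_gt (-1) s with hs | hs
  · rcases le_or_gt s 1 with hs1 | hs1
    · have := key (1 + ‖s‖) (by positivity) (by
        have : ‖s‖ ≤ 1 := abs_le.2 ⟨hs, hs1⟩
        linarith)
      refine (fk_le hH s).trans ?_
      calc 1 / Real.Gamma (H + 1/2) = 2 * (1 / Real.Gamma (H + 1/2)) * (1 / 2) := by ring
        _ ≤ _ := by gcongr
    · have : fracKernel H s = 0 := by
        unfold fracKernel
        rw [max_eq_right (by linarith), max_eq_right (by linarith)]
        simp
      rw [this]
      positivity
  · have u := fk_ub hH (-s) (by linarith)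
    rw [neg_neg] at u
    have n : ‖s‖ = -s := abs_of_neg (by linarith)
    have hs0 : 0 < -s := by linarith
    refine u.trans ?_
    have e : (-s) ^ (H - 1/2 - 1) ≤ 2 * (1 + ‖s‖) ^ (-(3/2 - H)) := by
      have hx : (1 + -s) = (-s) * ((1 + -s) / -s) := by rw [mul_div_cancel₀ _ hs0.ne']
      have k := key ((1 + -s) / -s) (by positivity) (by rw [div_le_iff₀ hs0]; linarith)
      rw [n, hx, Real.mul_rpow hs0.le (by positivity)]
      have e1 : H - 1/2 - 1 = -(3/2 - H) := by ring
      rw [e1]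
      have := mul_le_mul_of_nonneg_left k (Real.rpow_nonneg hs0.le (-(3/2 - H)))
      linarith
    calc _ ≤ 1 / Real.Gamma (H + 1/2) * (1 * (2 * (1 + ‖s‖) ^ (-(3/2 - H)))) := by
          gcongr
          linarith
      _ = _ := by ring

lemma fk_sq_int (hH : H ∈ Ioo (1/2 : ℝ) 1) : Integrable (fun s => fracKernel H s ^ 2) := by
  have := hH.2
  have i := integrable_one_add_norm (E := ℝ) (μ := volume) (r := 3 - 2 * H)
    (by simp; linarith)
  have hc := fk_cont hH
  refine Integrable.mono' (i.const_mul ((2 * (1 / Real.Gamma (H + 1/2))) ^ 2)) (by fun_prop)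
    (Eventually.of_forall fun s => ?_)
  rw [Real.norm_of_nonneg (by positivity)]
  have h0 := fk_nonneg hH s
  have e : (1 + ‖s‖) ^ (-(3 - 2 * H)) = ((1 + ‖s‖) ^ (-(3/2 - H))) ^ 2 := by
    rw [← Real.rpow_natCast, ← Real.rpow_mul (by positivity)]
    congr 1
    push_cast
    ring
  rw [e, ← mul_pow]
  exact pow_le_pow_left₀ h0 (fk_decay hH s) 2

lemma fk_mid (s : ℝ) (h0 : 0 ≤ s) (h1 : s ≤ 1) :
    fracKernel H s = (1 - s) ^ (H - 1/2) / Real.Gamma (H + 1/2) - 0 ^ (H - 1/2) / Real.Gamma (H + 1/2) := by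
  unfold fracKernel
  rw [max_eq_left (by linarith), max_eq_right (by linarith), sub_div]

lemma fk_mid' (hH : H ∈ Ioo (1/2 : ℝ) 1) (s : ℝ) (h0 : 0 ≤ s) (h1 : s ≤ 1) :
    fracKernel H s = (1 - s) ^ (H - 1/2) / Real.Gamma (H + 1/2) := by
  rw [fk_mid s h0 h1, Real.zero_rpow (by linarith [hH.1])]
  simp

lemma fk_zero (hH : H ∈ Ioo (1/2 : ℝ) 1) : fracKernel H 0 = 1 / Real.Gamma (H + 1/2) := by
  rw [fk_mid' hH 0 le_rfl zero_le_one]; simp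

lemma fk_half_pos (hH : H ∈ Ioo (1/2 : ℝ) 1) : 0 < fracKernel H (1/2) := by
  rw [fk_mid' hH (1/2) (by norm_num) (by norm_num)]
  have := fk_gam hH
  have : (0:ℝ) < 1 - 1/2 := by norm_num
  positivity

lemma fk_half_le (hH : H ∈ Ioo (1/2 : ℝ) 1) (s : ℝ) (h0 : 0 ≤ s) (h1 : s ≤ 1/2) :
    fracKernel H (1/2) ≤ fracKernel H s := by
  rw [fk_mid' hH (1/2) (by norm_num) (by norm_num), fk_mid' hH s h0 (by linarith)]
  have := fk_gam hH
  have := hH.1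
  gcongr
  

lemma fk_osc (hH : H ∈ Ioo (1/2 : ℝ) 1) : ∃ κ > 0, ∃ d > 0, ∀ l : ℝ,
    κ * min 1 ((l * d) ^ 2) ≤ ∫ s in Icc (0:ℝ) (1/2), (1 - Real.cos (l * fracKernel H s)) := by
  have gp := fk_gam hH
  have h1 := hH.1
  have h2 := hH.2
  set A := Real.Gamma (H + 1/2)
  set α := H - 1/2 with hα
  have αp : 0 < α := by rw [hα]; linarith
  have hlt : (1/2 : ℝ) ^ α < 1 := Real.rpow_lt_one (by norm_num) (by norm_num) αp
  set d := (1 - (1/2 : ℝ) ^ α) / A with hd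
  have dp : 0 < d := div_pos (by linarith) gp
  set C := α * (1/2 : ℝ) ^ (α - 1) / A with hC
  have Cp : 0 < C := by positivity
  refine ⟨d / C / 40, by positivity, d / 2, by positivity, fun l => ?_⟩
  have o := aux_osc (fun s => (1 - s) ^ α / A) (fun s => (-1) * α * (1 - s) ^ (α - 1) / A) (1/2) C
    (by norm_num) Cp ?_ ?_ ?_ ?_ d dp ?_ l
  · rw [integral_Icc_eq_integral_Ioc, ← intervalIntegral.integral_of_le (by norm_num)]
    have e : ∫ s in (0:ℝ)..(1/2), (1 - Real.cos (l * fracKernel H s)) =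
        ∫ s in (0:ℝ)..(1/2), (1 - Real.cos (l * ((1 - s) ^ α / A))) := by
      refine intervalIntegral.integral_congr fun s hs => ?_
      rw [uIcc_of_le (by norm_num)] at hs
      rw [fk_mid' hH s hs.1 (by linarith [hs.2])]
    rw [e]
    refine le_trans (le_of_eq ?_) o
    rw [mul_div_assoc l]
    ring
  · intro s hs
    have : (1 - s) ≠ 0 := by linarith [hs.2]
    have := (((hasDerivAt_id s).const_sub 1).rpow_const (p := α) (Or.inl this)).div_const A
    simpa using this
  · apply ContinuousOn.div_const
    apply ContinuousOn.mul (by fun_prop)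
    apply ContinuousOn.rpow_const (by fun_prop)
    intro s hs
    left
    linarith [hs.2]
  · intro s hs
    have : 0 < 1 - s := by linarith [hs.2]
    have : 0 < α * (1 - s) ^ (α - 1) / A := by positivity
    calc (-1) * α * (1 - s) ^ (α - 1) / A = -(α * (1 - s) ^ (α - 1) / A) := by ring
      _ ≤ 0 := by linarith
  · intro s hs
    calc -((-1) * α * (1 - s) ^ (α - 1) / A) = (α * (1 - s) ^ (α - 1) / A) := by ring
      _ ≤ _ := by
        rw [hC]
        gcongr ?_ * ?_ / _
        exact Real.rpow_le_rpow_of_nonpos (by norm_num) (by linarith [hs.2]) (by linarith)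
  · simp only [sub_zero, Real.one_rpow]
    rw [hd, sub_div]
    norm_num

lemma fk_scale (t s : ℝ) (ht : 0 < t) :
    fracKernelT H t s = t ^ (H - 1/2) * fracKernel H (s / t) := by
  unfold fracKernelT fracKernel
  have e1 : max (t - s) 0 = t * max (1 - s / t) 0 := by
    rw [mul_max_of_nonneg _ _ ht.le, mul_zero, mul_sub, mul_one, mul_div_cancel₀ _ ht.ne']
  have e2 : max (-s) 0 = t * max (-(s / t)) 0 := by
    rw [mul_max_of_nonneg _ _ ht.le, mul_zero, mul_neg, mul_div_cancel₀ _ ht.ne']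
  rw [e1, e2, Real.mul_rpow ht.le (le_max_right _ _), Real.mul_rpow ht.le (le_max_right _ _)]
  ring
end


lemma mu_sf {μ : Measure ℝ} (hμ0 : μ {0} = 0)
    (hμint : Integrable (fun u : ℝ => min 1 (u ^ 2)) μ) : SigmaFinite μ := by
  obtain ⟨t, ht, h0, hs⟩ := hμint.aefinStronglyMeasurable.exists_set_sigmaFinite
  have e : μ tᶜ = 0 := by
    have h1 : ∀ᵐ u ∂(μ.restrict tᶜ), u = 0 := by
      filter_upwards [h0] with u hu
      by_contra hne
      have : 0 < min 1 (u ^ 2) := lt_min one_pos (by positivity)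
      simp only [Pi.zero_apply] at hu
      linarith
    have h2 : ∀ᵐ u ∂(μ.restrict tᶜ), u ≠ 0 := by
      refine ae_restrict_of_ae ?_
      rw [ae_iff]
      simpa using hμ0
    have h3 : ∀ᵐ u ∂(μ.restrict tᶜ), False := by
      filter_upwards [h1, h2] with u a b using b a
    rw [ae_iff] at h3
    simpa using h3
  have : μ.restrict t = μ := Measure.restrict_eq_self_of_ae_mem (by
    rw [ae_iff]; exact e)
  rwa [this] at hs

lemma mu_nint {μ : Measure ℝ} 
    (hμint : Integrable (fun u : ℝ => min 1 (u ^ 2)) μ)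
    (hμexp : ∀ C : ℝ, Integrable (fun u : ℝ => Real.exp (C * u)) (μ.restrict {u : ℝ | 1 ≤ |u|})) :
    NInt μ := by
  intro C
  have hm : MeasurableSet {u : ℝ | 1 ≤ |u|} := measurableSet_le (by fun_prop) (by fun_prop)
  rw [← integrableOn_univ, ← union_compl_self {u : ℝ | 1 ≤ |u|}]
  apply IntegrableOn.union
  · refine Integrable.mono' (((hμexp (|C| + 1)).add (hμexp (-(|C| + 1)))).const_mul 2)
      (by fun_prop) (Eventually.of_forall fun v => ?_)
    rw [Real.norm_of_nonneg (by positivity)]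
    have h1 : Real.exp (C * |v|) ≤ Real.exp (|C| * |v|) :=
      Real.exp_le_exp.2 (mul_le_mul_of_nonneg_right (le_abs_self _) (abs_nonneg _))
    have h2 := aux_sq_exp v
    have h3 : Real.exp |v| * Real.exp (|C| * |v|) = Real.exp ((|C| + 1) * |v|) := by
      rw [← Real.exp_add]; ring_nf
    have h4 : Real.exp ((|C| + 1) * |v|) ≤
        Real.exp ((|C| + 1) * v) + Real.exp (-(|C| + 1) * v) := by
      have p1 := Real.exp_pos ((|C| + 1) * v)
      have p2 := Real.exp_pos (-(|C| + 1) * v)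
      rcases abs_cases v with ⟨e, _⟩ | ⟨e, _⟩
      · rw [e]; linarith
      · rw [e, mul_neg, ← neg_mul]; linarith
    calc v ^ 2 * Real.exp (C * |v|) ≤ (2 * Real.exp |v|) * Real.exp (|C| * |v|) := by gcongr
      _ = 2 * Real.exp ((|C| + 1) * |v|) := by rw [← h3]; ring
      _ ≤ _ := by simp only [Pi.add_apply]; gcongr
  · refine Integrable.mono' ((hμint.const_mul (Real.exp |C|)).integrableOn) (by fun_prop) ?_
    refine (ae_restrict_iff' hm.compl).2 (Eventually.of_forall fun v hv => ?_)
    have hv : |v| < 1 := by simpa using hv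
    have hv2 : v ^ 2 ≤ 1 := by rw [← sq_abs]; exact pow_le_one₀ (abs_nonneg _) hv.le
    rw [Real.norm_of_nonneg (by positivity), min_eq_right hv2, mul_comm]
    gcongr
    calc C * |v| ≤ |C| * |v| := mul_le_mul_of_nonneg_right (le_abs_self _) (abs_nonneg _)
      _ ≤ |C| * 1 := by gcongr
      _ = _ := mul_one _

lemma NInt.fin {μ : Measure ℝ} (h : NInt μ) (a b : ℝ) (ha : 0 < a) : μ (Icc a b) < ⊤ := by
  have h0 := h 0
  have := h0.measure_ge_lt_top (ε := a ^ 2) (by positivity)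
  refine lt_of_le_of_lt (measure_mono fun u hu => ?_) this
  simp only [zero_mul, Real.exp_zero, mul_one, mem_ofPred_eq]
  exact pow_le_pow_left₀ ha.le hu.1 2

lemma mu_pos {μ : Measure ℝ} (hμpos : 0 < μ (Ioi (0 : ℝ))) :
    ∃ a b : ℝ, 0 < a ∧ a ≤ b ∧ 0 < μ (Icc a b) := by
  by_contra! hcon
  have : Ioi (0:ℝ) ⊆ ⋃ n : ℕ, Icc (1 / ((n : ℝ) + 1)) (n + 1) := by
    intro u hu
    have hu : 0 < u := hu
    obtain ⟨n, hn⟩ := exists_nat_gt (max u (1 / u))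
    have h1 := (le_max_left _ _).trans hn.le
    have h2 := (le_max_right _ _).trans hn.le
    rw [mem_iUnion]
    refine ⟨n, ?_, by linarith⟩
    rw [div_le_iff₀ hu] at h2
    rw [div_le_iff₀ (by positivity)]
    nlinarith
  have z : μ (⋃ n : ℕ, Icc (1 / ((n : ℝ) + 1)) (n + 1)) = 0 := by
    refine measure_iUnion_null fun n => ?_
    have := hcon (1 / ((n : ℝ) + 1)) (n + 1) (by positivity) (by
      rw [div_le_iff₀ (by positivity)]
      have : (0:ℝ) ≤ n := by positivity
      nlinarith)
    exact le_antisymm this zero_le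
  exact hμpos.ne' (measure_mono_null this z)

noncomputable def nuOf (μ : Measure ℝ) (f : ℝ → ℝ) : Measure ℝ :=
  ((volume : Measure ℝ).prod μ).map (fun p : ℝ × ℝ => f p.1 * p.2)

section
variable {μ : Measure ℝ} [SigmaFinite μ] {f : ℝ → ℝ} {A : ℝ}

lemma nu_nint (hμ : NInt μ) (fc : Continuous f) (f0 : ∀ s, 0 ≤ f s) (fA : ∀ s, f s ≤ A)
    (f2 : Integrable (fun s => f s ^ 2)) : NInt (nuOf μ f) := by
  intro C
  unfold nuOf
  rw [integrable_map_measure (by fun_prop) (by fun_prop)]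
  refine Integrable.mono' (f2.mul_prod (hμ (|C| * A))) (by fun_prop)
    (Eventually.of_forall fun p => ?_)
  have := f0 p.1
  have := fA p.1
  simp only [Function.comp]
  rw [Real.norm_of_nonneg (by positivity), abs_mul, abs_of_nonneg (f0 _), mul_pow, mul_assoc]
  gcongr ?_ * (?_ * Real.exp ?_)
  calc C * (f p.1 * |p.2|) ≤ |C| * (f p.1 * |p.2|) := by
        refine mul_le_mul_of_nonneg_right (le_abs_self _) (by positivity)
    _ ≤ |C| * (A * |p.2|) := by gcongr
    _ = _ := by ring

lemma nu_integral (fc : Continuous f) {E : Type*} [NormedAddCommGroup E] [NormedSpace ℝ E]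
    {G : ℝ → E} (hc : Integrable G (nuOf μ f)) :
    ∫ v, G v ∂(nuOf μ f) = ∫ s, ∫ u, G (f s * u) ∂μ := by
  have hm : AEMeasurable (fun p : ℝ × ℝ => f p.1 * p.2) ((volume : Measure ℝ).prod μ) := by
    fun_prop
  unfold nuOf at *
  rw [integral_map hm hc.1, integral_prod]
  exact (integrable_map_measure hc.1 hm).1 hc

lemma nu_intble (fc : Continuous f) {E : Type*} [NormedAddCommGroup E]
    {G : ℝ → E} (hc : Integrable G (nuOf μ f)) :
    Integrable (fun s => ∫ u, ‖G (f s * u)‖ ∂μ) := by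
  have hm : AEMeasurable (fun p : ℝ × ℝ => f p.1 * p.2) ((volume : Measure ℝ).prod μ) := by
    fun_prop
  unfold nuOf at *
  exact ((integrable_map_measure hc.1 hm).1 hc).norm.integral_prod_left

lemma nu_lb (fc : Continuous f) {G : ℝ → ℝ} (hc : Integrable G (nuOf μ f)) (G0 : ∀ v, 0 ≤ G v)
    (S T : Set ℝ) (hS : MeasurableSet S) (hT : MeasurableSet T) (hTf : μ T < ⊤) (c : ℝ)
    (h : ∀ u ∈ T, c ≤ ∫ s in S, G (f s * u)) :
    c * μ.real T ≤ ∫ v, G v ∂(nuOf μ f) := by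
  have hm : AEMeasurable (fun p : ℝ × ℝ => f p.1 * p.2) ((volume : Measure ℝ).prod μ) := by
    fun_prop
  unfold nuOf at *
  have hi := (integrable_map_measure hc.1 hm).1 hc
  rw [integral_map hm hc.1]
  have hi2 : Integrable (G ∘ fun p : ℝ × ℝ => f p.1 * p.2)
      ((volume.restrict S).prod (μ.restrict T)) := by
    rw [Measure.prod_restrict]
    exact hi.integrableOn
  calc c * μ.real T = ∫ u in T, c ∂μ := by
        rw [setIntegral_const, smul_eq_mul, mul_comm]
    _ ≤ ∫ u in T, (∫ s in S, G (f s * u)) ∂μ := by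
        refine setIntegral_mono_on (integrableOn_const hTf.ne) ?_ hT h
        exact hi2.integral_prod_right
    _ = ∫ p in S ×ˢ T, (G ∘ fun p : ℝ × ℝ => f p.1 * p.2) p ∂(volume.prod μ) := by
        rw [← Measure.prod_restrict, integral_prod_symm _ hi2]
        rfl
    _ ≤ _ := setIntegral_le_integral hi (Eventually.of_forall fun p => G0 _)

lemma nu_psi (hν : NInt (nuOf μ f)) (fc : Continuous f) (z : ℂ) :
    kernelPsi μ f z = nPsi (nuOf μ f) z := by
  unfold nPsi kernelPsi
  rw [nu_integral fc (hν.i_psi z)]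

lemma nu_m0 (hν : NInt (nuOf μ f)) (fc : Continuous f) (x : ℝ) :
    kernelM μ f 0 x = nM0 (nuOf μ f) x := by
  unfold nM0 kernelM
  rw [nu_integral fc (hν.i0 x)]
  congr 1; ext s
  rw [pow_zero, one_mul]
  change ∫ u, (Real.exp (f s * x * u) - 1 - f s * x * u) ∂μ = _
  congr 1; ext u
  ring_nf

lemma nu_m1 (hν : NInt (nuOf μ f)) (fc : Continuous f) (x : ℝ) :
    kernelM μ f 1 x = nM1 (nuOf μ f) x := by
  unfold nM1 kernelM
  rw [nu_integral fc (hν.i1 x)]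
  congr 1; ext s
  unfold levyM
  rw [← integral_const_mul]
  congr 1; ext u
  ring_nf

lemma nu_m2 (hν : NInt (nuOf μ f)) (fc : Continuous f) (x : ℝ) :
    nM2 (nuOf μ f) x = kernelM μ f 2 x := by
  unfold nM2 kernelM
  rw [nu_integral fc (hν.i2 x)]
  congr 1; ext s
  unfold levyM
  rw [← integral_const_mul]
  congr 1; ext u
  ring_nf

lemma nu_m4 (hν : NInt (nuOf μ f)) (fc : Continuous f) (x : ℝ) :
    nM4 (nuOf μ f) x = kernelM μ f 4 x := by
  unfold nM4 kernelM
  rw [nu_integral fc (hν.i4 x)]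
  congr 1; ext s
  unfold levyM
  rw [← integral_const_mul]
  congr 1; ext u
  ring_nf

lemma nu_i2 (hν : NInt (nuOf μ f)) (fc : Continuous f) (x : ℝ) :
    Integrable (fun s => f s ^ 2 * levyM μ 2 (f s * x)) := by
  refine (nu_intble fc (hν.i2 x)).congr (Eventually.of_forall fun s => ?_)
  simp only
  unfold levyM
  rw [← integral_const_mul]
  congr 1; ext u
  rw [Real.norm_of_nonneg (by positivity)]
  ring_nf

lemma nu_i4 (hν : NInt (nuOf μ f)) (fc : Continuous f) (x : ℝ) :
    Integrable (fun s => f s ^ 4 * levyM μ 4 (f s * x)) := by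
  refine (nu_intble fc (hν.i4 x)).congr (Eventually.of_forall fun s => ?_)
  simp only
  unfold levyM
  rw [← integral_const_mul]
  congr 1; ext u
  rw [Real.norm_of_nonneg (by positivity)]
  ring_nf
end


lemma aux_min_mul (p p' q : ℝ) (h0 : 0 ≤ p) (h : p ≤ p') (hq : 0 ≤ q) :
    min 1 p * min 1 q ≤ min 1 (q * p') := by
  have a1 : 0 ≤ min 1 p := le_min zero_le_one h0
  have a2 : 0 ≤ min 1 q := le_min zero_le_one hq
  apply le_min
  · exact mul_le_one₀ (min_le_left _ _) a2 (min_le_left _ _)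
  · rw [mul_comm]
    exact mul_le_mul (min_le_right _ _) ((min_le_right _ _).trans h) a1 hq

section
variable {μ : Measure ℝ} [SigmaFinite μ] {H : ℝ}

lemma G1 (hH : H ∈ Ioo (1/2 : ℝ) 1) (hμ : NInt μ) (hν : NInt (nuOf μ (fracKernel H)))
    (a b : ℝ) (ha : 0 < a) (hm : 0 < μ (Icc a b)) :
    ∃ c1 > 0, ∃ c2 > 0, ∀ x w : ℝ, 0 ≤ x →
      c1 * Real.exp (c2 * x) * min 1 (w ^ 2) ≤ nG (nuOf μ (fracKernel H)) w x := by
  obtain ⟨κ, κp, d, dp, ho⟩ := fk_osc hH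
  have hf := hμ.fin a b ha
  have hmr : 0 < μ.real (Icc a b) := ENNReal.toReal_pos hm.ne' hf.ne
  have fh := fk_half_pos hH
  have fc := fk_cont hH
  have mp : 0 < min 1 ((a * d) ^ 2) := lt_min one_pos (by positivity)
  refine ⟨κ * min 1 ((a * d) ^ 2) * μ.real (Icc a b), by positivity,
    fracKernel H (1/2) * a, by positivity, fun x w hx => ?_⟩
  have := nu_lb fc (hν.i_G w x) (fun v => mul_nonneg (Real.exp_pos _).le (by
    linarith [Real.cos_le_one (w * v)])) (Icc 0 (1/2)) (Icc a b) measurableSet_Icc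
    measurableSet_Icc hf (κ * min 1 ((a * d) ^ 2) * Real.exp (fracKernel H (1/2) * a * x) *
      min 1 (w ^ 2)) ?_
  · unfold nG
    refine le_trans (le_of_eq ?_) this
    ring
  intro u hu
  have hu0 : 0 < u := ha.trans_le hu.1
  calc _ ≤ Real.exp (fracKernel H (1/2) * a * x) *
        ∫ s in Icc (0:ℝ) (1/2), (1 - Real.cos (w * u * fracKernel H s)) := by
        have h1 := ho (w * u)
        have h2 := aux_min_mul ((a * d) ^ 2) ((u * d) ^ 2) (w ^ 2) (by positivity) (by
          have := hu.1; gcongr) (by positivity)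
        have h3 : w ^ 2 * (u * d) ^ 2 = (w * u * d) ^ 2 := by ring
        rw [h3] at h2
        have h4 := (mul_le_mul_of_nonneg_left h2 κp.le).trans h1
        have h5 := mul_le_mul_of_nonneg_left h4 (Real.exp_pos (fracKernel H (1/2) * a * x)).le
        refine le_trans (le_of_eq ?_) h5
        ring
    _ = ∫ s in Icc (0:ℝ) (1/2), Real.exp (fracKernel H (1/2) * a * x) *
          (1 - Real.cos (w * u * fracKernel H s)) := by rw [integral_const_mul]
    _ ≤ _ := by
        refine setIntegral_mono_on ?_ ?_ measurableSet_Icc ?_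
        · exact (Continuous.continuousOn (by fun_prop)).integrableOn_Icc
        · exact (Continuous.continuousOn (by fun_prop)).integrableOn_Icc
        intro s hs
        have e : w * u * fracKernel H s = w * (fracKernel H s * u) := by ring
        rw [e]
        refine mul_le_mul_of_nonneg_right (Real.exp_le_exp.2 ?_)
          (by linarith [Real.cos_le_one (w * (fracKernel H s * u))])
        rw [mul_comm _ x]
        have := fk_half_le hH s hs.1 hs.2
        have := hu.1
        have := fk_nonneg hH s
        gcongr

lemma G2 (hH : H ∈ Ioo (1/2 : ℝ) 1) (hμ : NInt μ) (hν : NInt (nuOf μ (fracKernel H)))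
    (a b : ℝ) (ha : 0 < a) (hm : 0 < μ (Icc a b)) :
    ∃ c3 > 0, ∀ x w : ℝ, 0 ≤ x → 1 ≤ |w| →
      c3 * |w| ^ (4 * (H - 1/2)) ≤ nG (nuOf μ (fracKernel H)) w x := by
  have h1 := hH.1
  have h2 := hH.2
  have hf := hμ.fin a b ha
  have hmr : 0 < μ.real (Icc a b) := ENNReal.toReal_pos hm.ne' hf.ne
  have fc := fk_cont hH
  have gp := fk_gam hH
  set A := 1 / Real.Gamma (H + 1/2) with hA
  have Ap : 0 < A := by positivity
  set α := H - 1/2 with hα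
  have αp : 0 < α := by rw [hα]; linarith
  have α2 : α < 1/2 := by rw [hα]; linarith
  set R := 1 + (A * b) ^ 2 with hR
  have Rp : 1 ≤ R := by rw [hR]; nlinarith [sq_nonneg (A * b)]
  refine ⟨(R * a ^ 2 * (A * α * (3 * R) ^ (α - 1)) ^ 2 / 4) * μ.real (Icc a b), by positivity,
    fun x w hx hw => ?_⟩
  have w2 : 1 ≤ w ^ 2 := by rw [← sq_abs]; exact one_le_pow₀ hw
  set S := R * w ^ 2 with hS
  have S1 : 1 ≤ S := by rw [hS]; nlinarith
  have := nu_lb fc (hν.i_G w x) (fun v => mul_nonneg (Real.exp_pos _).le (by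
    linarith [Real.cos_le_one (w * v)])) (Icc (-(2 * S)) (-S)) (Icc a b) measurableSet_Icc
    measurableSet_Icc hf (S * (w ^ 2 * a ^ 2 * (A * (α * (3 * S) ^ (α - 1))) ^ 2 / 4)) ?_
  · unfold nG
    refine le_trans (le_of_eq ?_) this
    have e1 : (3 * S) ^ (α - 1) = (3 * R) ^ (α - 1) * |w| ^ (2 * (α - 1)) := by
      rw [hS, ← mul_assoc, Real.mul_rpow (by positivity) (by positivity), Real.rpow_mul (abs_nonneg _)]
      congr 2
      rw [← sq_abs]; norm_cast
    have e2 : |w| ^ (4 * α) = w ^ 2 * w ^ 2 * (|w| ^ (2 * (α - 1))) ^ 2 := by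
      have wp : 0 < |w| := by linarith
      rw [← sq_abs, ← Real.rpow_natCast, ← Real.rpow_natCast, ← Real.rpow_mul wp.le,
        ← Real.rpow_add wp, ← Real.rpow_add wp]
      congr 1
      push_cast
      ring
    rw [e1, e2, hS]
    ring
  intro u hu
  have hu0 : 0 < u := ha.trans_le hu.1
  calc _ = ∫ s in Icc (-(2 * S)) (-S), (w ^ 2 * a ^ 2 * (A * (α * (3 * S) ^ (α - 1))) ^ 2 / 4) := by
        rw [setIntegral_const, smul_eq_mul]
        congr 1
        rw [Real.volume_real_Icc_of_le (by linarith)]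
        ring
    _ ≤ _ := by
        refine setIntegral_mono_on ?_ ?_ measurableSet_Icc ?_
        · exact (Continuous.continuousOn (by fun_prop)).integrableOn_Icc
        · exact (Continuous.continuousOn (by fun_prop)).integrableOn_Icc
        intro s hs
        have hs0 : 0 < -s := by linarith [hs.2]
        have fl := fk_lb hH (-s) hs0
        have fu := fk_ub hH (-s) hs0
        rw [neg_neg, ← hα, ← hA] at fl fu
        set F := fracKernel H s
        have F0 : 0 ≤ F := fk_nonneg hH s
        have l1 : A * (α * (3 * S) ^ (α - 1)) ≤ F := by
          refine le_trans ?_ fl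
          gcongr A * (α * ?_)
          exact Real.rpow_le_rpow_of_nonpos (by linarith) (by linarith [hs.1]) (by linarith)
        have u1 : F ^ 2 ≤ A ^ 2 / (-s) := by
          have : F ≤ A * (1 * (-s) ^ (-(1/2) : ℝ)) := by
            refine fu.trans ?_
            gcongr A * (?_ * ?_)
            · linarith
            · exact Real.rpow_le_rpow_of_exponent_le (by linarith [hs.2]) (by linarith)
          have h3 := pow_le_pow_left₀ F0 this 2
          refine h3.trans (le_of_eq ?_)
          rw [one_mul, mul_pow, ← Real.rpow_natCast ((-s) ^ _), ← Real.rpow_mul hs0.le]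
          norm_num
          rw [Real.rpow_neg_one]
          field_simp
        have b1 : (w * (F * u)) ^ 2 ≤ 1 := by
          have : (w * (F * u)) ^ 2 = w ^ 2 * u ^ 2 * F ^ 2 := by ring
          rw [this]
          calc w ^ 2 * u ^ 2 * F ^ 2 ≤ w ^ 2 * b ^ 2 * (A ^ 2 / (-s)) := by
                have := hu.2
                gcongr
            _ = (w ^ 2 * (A * b) ^ 2) / (-s) := by ring
            _ ≤ 1 := by
                rw [div_le_one hs0]
                have := hs.2
                rw [hS, hR] at this
                nlinarith
        have b2 : |w * (F * u)| ≤ 1 := by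
          rw [← sq_abs] at b1
          exact (sq_le_one_iff₀ (abs_nonneg _)).1 b1
        have c := aux_cos_lb _ b2
        have ex : 1 ≤ Real.exp (x * (F * u)) := Real.one_le_exp (by positivity)
        have q : w ^ 2 * a ^ 2 * (A * (α * (3 * S) ^ (α - 1))) ^ 2 / 4 ≤ (w * (F * u)) ^ 2 / 4 := by
          have : (w * (F * u)) ^ 2 = w ^ 2 * u ^ 2 * F ^ 2 := by ring
          rw [this]
          have := hu.1
          gcongr
        have c0 : 0 ≤ 1 - Real.cos (w * (F * u)) := by linarith [Real.cos_le_one (w * (F * u))]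
        calc _ ≤ 1 * (1 - Real.cos (w * (F * u))) := by linarith
          _ ≤ _ := by gcongr

lemma MLB (hH : H ∈ Ioo (1/2 : ℝ) 1) (hμ : NInt μ) (hν : NInt (nuOf μ (fracKernel H)))
    (a b : ℝ) (ha : 0 < a) (hm : 0 < μ (Icc a b)) :
    ∃ m > 0, ∀ x : ℝ, 0 ≤ x → m ≤ nM2 (nuOf μ (fracKernel H)) x ∧
      0 < nM4 (nuOf μ (fracKernel H)) x := by
  have hf := hμ.fin a b ha
  have hmr : 0 < μ.real (Icc a b) := ENNReal.toReal_pos hm.ne' hf.ne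
  have fc := fk_cont hH
  have fh := fk_half_pos hH
  have vol : (volume : Measure ℝ).real (Icc (0:ℝ) (1/2)) = 1/2 := by
    rw [Real.volume_real_Icc_of_le (by norm_num)]; norm_num
  have key : ∀ (n : ℕ) (x u : ℝ), 0 ≤ x → u ∈ Icc a b → 1/2 * (fracKernel H (1/2) * a) ^ n ≤
      ∫ s in Icc (0:ℝ) (1/2), (fracKernel H s * u) ^ n * Real.exp (x * (fracKernel H s * u)) := by
    intro n x u hx hu
    have hu0 : 0 < u := ha.trans_le hu.1
    calc _ = ∫ s in Icc (0:ℝ) (1/2), (fracKernel H (1/2) * a) ^ n := by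
          rw [setIntegral_const, smul_eq_mul, vol]
      _ ≤ _ := by
        refine setIntegral_mono_on ?_ ?_ measurableSet_Icc ?_
        · exact (Continuous.continuousOn (by fun_prop)).integrableOn_Icc
        · exact (Continuous.continuousOn (by fun_prop)).integrableOn_Icc
        intro s hs
        have h1 := fk_half_le hH s hs.1 hs.2
        have h2 := hu.1
        have h3 := fk_nonneg hH s
        have ex : 1 ≤ Real.exp (x * (fracKernel H s * u)) := Real.one_le_exp (by positivity)
        calc (fracKernel H (1/2) * a) ^ n ≤ (fracKernel H s * u) ^ n := by gcongr
          _ ≤ _ := le_mul_of_one_le_right (by positivity) ex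
  refine ⟨1/2 * (fracKernel H (1/2) * a) ^ 2 * μ.real (Icc a b), by positivity, fun x hx => ⟨?_, ?_⟩⟩
  · exact nu_lb fc (hν.i2 x) (fun v => by positivity) (Icc 0 (1/2)) (Icc a b) measurableSet_Icc
      measurableSet_Icc hf _ (fun u hu => key 2 x u hx hu)
  · refine lt_of_lt_of_le ?_ (nu_lb fc (hν.i4 x) (fun v => by positivity) (Icc 0 (1/2)) (Icc a b)
      measurableSet_Icc measurableSet_Icc hf _ (fun u hu => key 4 x u hx hu))
    positivity
end


lemma lev2 (μ : Measure ℝ) (x : ℝ) : levyM μ 2 x = nM2 μ x := rfl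
lemma lev4 (μ : Measure ℝ) (x : ℝ) : levyM μ 4 x = nM4 μ x := rfl

lemma aux_emono (x y v : ℝ) (hx : 0 ≤ x) (hy : x ≤ y) :
    Real.exp (x * v) ≤ Real.exp (y * v) + Real.exp (0 * v) := by
  have p := Real.exp_pos (y * v)
  rw [zero_mul, Real.exp_zero]
  rcases le_total 0 v with h | h
  · have : Real.exp (x * v) ≤ Real.exp (y * v) := by gcongr
    linarith
  · have : Real.exp (x * v) ≤ 1 := by
      rw [Real.exp_le_one_iff]
      exact mul_nonpos_of_nonneg_of_nonpos hx h
    linarith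

lemma nM2_mono {μ : Measure ℝ} (hμ : NInt μ) (x y : ℝ) (hx : 0 ≤ x) (hy : x ≤ y) :
    nM2 μ x ≤ nM2 μ y + nM2 μ 0 := by
  unfold nM2
  rw [← integral_add (hμ.i2 y) (hμ.i2 0)]
  refine integral_mono (hμ.i2 x) ((hμ.i2 y).add (hμ.i2 0)) fun v => ?_
  have := mul_le_mul_of_nonneg_left (aux_emono x y v hx hy) (sq_nonneg v)
  simp only
  linarith

lemma nM4_mono {μ : Measure ℝ} (hμ : NInt μ) (x y : ℝ) (hx : 0 ≤ x) (hy : x ≤ y) :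
    nM4 μ x ≤ nM4 μ y + nM4 μ 0 := by
  unfold nM4
  rw [← integral_add (hμ.i4 y) (hμ.i4 0)]
  refine integral_mono (hμ.i4 x) ((hμ.i4 y).add (hμ.i4 0)) fun v => ?_
  have := mul_le_mul_of_nonneg_left (aux_emono x y v hx hy) (show 0 ≤ v ^ 4 by positivity)
  simp only
  linarith

lemma nM2_nonneg (μ : Measure ℝ) (x : ℝ) : 0 ≤ nM2 μ x := integral_nonneg fun v => by positivity
lemma nM4_nonneg (μ : Measure ℝ) (x : ℝ) : 0 ≤ nM4 μ x := integral_nonneg fun v => by positivity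

lemma nM2_top {μ : Measure ℝ} (hμ : NInt μ) (a b : ℝ) (ha : 0 < a) (hm : 0 < μ (Icc a b)) :
    Tendsto (nM2 μ) atTop atTop := by
  have hf := hμ.fin a b ha
  have hmr : 0 < μ.real (Icc a b) := ENNReal.toReal_pos hm.ne' hf.ne
  have t : Tendsto (fun x : ℝ => μ.real (Icc a b) * a ^ 2 * Real.exp (a * x)) atTop atTop :=
    (Real.tendsto_exp_atTop.comp (tendsto_id.const_mul_atTop ha)).const_mul_atTop (by positivity)
  refine tendsto_atTop_mono' _ ?_ t
  filter_upwards [eventually_ge_atTop 0] with x hx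
  calc _ = ∫ u in Icc a b, a ^ 2 * Real.exp (a * x) ∂μ := by
        rw [setIntegral_const, smul_eq_mul, mul_assoc]
    _ ≤ ∫ u in Icc a b, u ^ 2 * Real.exp (x * u) ∂μ := by
        refine setIntegral_mono_on (integrableOn_const hf.ne) (hμ.i2 x).integrableOn
          measurableSet_Icc fun u hu => ?_
        have := hu.1
        rw [mul_comm a x]
        gcongr
    _ ≤ _ := setIntegral_le_integral (hμ.i2 x) (Eventually.of_forall fun v => by positivity)

section
variable {μ : Measure ℝ} [SigmaFinite μ] {f : ℝ → ℝ} {A : ℝ}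

lemma f4_int (fc : Continuous f) (f0 : ∀ s, 0 ≤ f s) (fA : ∀ s, f s ≤ A)
    (f2 : Integrable (fun s => f s ^ 2)) : Integrable (fun s => f s ^ 4) := by
  refine Integrable.mono' (f2.const_mul (A ^ 2)) (by fun_prop) (Eventually.of_forall fun s => ?_)
  rw [Real.norm_of_nonneg (by positivity)]
  have := f0 s
  have := fA s
  calc f s ^ 4 = f s ^ 2 * f s ^ 2 := by ring
    _ ≤ _ := by gcongr

lemma nu_m4_le (hμ : NInt μ) (hν : NInt (nuOf μ f)) (fc : Continuous f) (f0 : ∀ s, 0 ≤ f s)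
    (fA : ∀ s, f s ≤ A) (f2 : Integrable (fun s => f s ^ 2)) (x : ℝ) (hx : 0 ≤ x) :
    nM4 (nuOf μ f) x ≤ (∫ s, f s ^ 4) * (nM4 μ (A * x) + nM4 μ 0) := by
  rw [nu_m4 hν fc, kernelM, ← integral_mul_const]
  refine integral_mono (nu_i4 hν fc x) ((f4_int fc f0 fA f2).mul_const _) fun s => ?_
  simp only [lev4]
  have h0 := f0 s
  have h1 := fA s
  refine mul_le_mul_of_nonneg_left (nM4_mono hμ _ _ (by positivity) (by gcongr)) (by positivity)

lemma nu_m2_ge (hμ : NInt μ) (hν : NInt (nuOf μ f)) (fc : Continuous f) (f0 : ∀ s, 0 ≤ f s)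
    (B σ : ℝ) (hB : 0 ≤ B) (hσ : 0 < σ) (hf : ∀ s ∈ Icc 0 σ, B ≤ f s) (x : ℝ) (hx : 0 ≤ x) :
    σ * B ^ 2 * (nM2 μ (B * x) - nM2 μ 0) ≤ nM2 (nuOf μ f) x := by
  rw [nu_m2 hν fc, kernelM]
  calc _ = ∫ s in Icc 0 σ, B ^ 2 * (nM2 μ (B * x) - nM2 μ 0) := by
        rw [setIntegral_const, smul_eq_mul, Real.volume_real_Icc_of_le hσ.le]; ring
    _ ≤ ∫ s in Icc 0 σ, f s ^ 2 * levyM μ 2 (f s * x) := by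
        refine setIntegral_mono_on ?_ (nu_i2 hν fc x).integrableOn measurableSet_Icc ?_
        · exact (Continuous.continuousOn (by fun_prop)).integrableOn_Icc
        intro s hs
        rw [lev2]
        have h1 := hf s hs
        have h2 := nM2_mono hμ (B * x) (f s * x) (by positivity) (by gcongr)
        have h3 := nM2_nonneg μ (f s * x)
        calc B ^ 2 * (nM2 μ (B * x) - nM2 μ 0) ≤ B ^ 2 * nM2 μ (f s * x) := by
              gcongr; linarith
          _ ≤ _ := by gcongr
    _ ≤ _ := by
        refine setIntegral_le_integral (nu_i2 hν fc x) (Eventually.of_forall fun s => ?_)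
        exact mul_nonneg (sq_nonneg _) (nM2_nonneg _ _)

lemma nu_lim (hμ : NInt μ) (hν : NInt (nuOf μ f)) (fc : Continuous f) (f0 : ∀ s, 0 ≤ f s)
    (fA : ∀ s, f s ≤ A) (f2 : Integrable (fun s => f s ^ 2)) (hA : 0 < A)
    (γ σ : ℝ) (hγ : 0 < γ) (hσ : 0 < σ) (hf : ∀ s ∈ Icc 0 σ, γ * A ≤ f s)
    (htop : Tendsto (nM2 μ) atTop atTop)
    (hT1 : Tendsto (fun ξ => levyM μ 4 ξ / (levyM μ 2 (γ * ξ)) ^ 2) atTop (nhds 0)) :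
    Tendsto (fun x => nM4 (nuOf μ f) x / nM2 (nuOf μ f) x ^ 2) atTop (nhds 0) := by
  have tA : Tendsto (fun x : ℝ => A * x) atTop atTop := tendsto_id.const_mul_atTop hA
  have tγ : Tendsto (fun x : ℝ => γ * (A * x)) atTop atTop := tA.const_mul_atTop hγ
  have a1 := hT1.comp tA
  have a2 := htop.comp tγ
  set I4 := ∫ s, f s ^ 4
  have I0 : 0 ≤ I4 := integral_nonneg fun s => by positivity
  set c := σ * (γ * A) ^ 2 with hc
  have cp : 0 < c := by positivity
  have a3 : Tendsto (fun x => 4 * I4 / c ^ 2 * (levyM μ 4 (A * x) / (levyM μ 2 (γ * (A * x))) ^ 2 +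
      nM4 μ 0 * ((nM2 μ (γ * (A * x)))⁻¹) ^ 2)) atTop (nhds 0) := by
    have b1 := (a2.inv_tendsto_atTop.pow 2).const_mul (nM4 μ 0)
    have := (a1.add b1).const_mul (4 * I4 / c ^ 2)
    simpa using this
  refine squeeze_zero' (Eventually.of_forall fun x => ?_) ?_ a3
  · exact div_nonneg (nM4_nonneg _ _) (sq_nonneg _)
  filter_upwards [eventually_ge_atTop 0, a2.eventually_ge_atTop (2 * nM2 μ 0 + 1)] with x hx hb
  simp only [Function.comp] at hb
  have n0 := nM2_nonneg μ 0
  have l := nu_m2_ge hμ hν fc f0 (γ * A) σ (by positivity) hσ hf x hx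
  have u := nu_m4_le hμ hν fc f0 fA f2 x hx
  rw [← hc, mul_assoc γ] at l
  rw [lev4, lev2]
  set Q := nM2 μ (γ * (A * x)) with hQ
  have Qp : 0 < Q := by linarith
  have l2 : c * (Q / 2) ≤ nM2 (nuOf μ f) x := by
    refine le_trans ?_ l
    gcongr
    linarith
  calc nM4 (nuOf μ f) x / nM2 (nuOf μ f) x ^ 2 ≤ (I4 * (nM4 μ (A * x) + nM4 μ 0)) / (c * (Q/2)) ^ 2 := by
        have := nM4_nonneg μ (A * x)
        have := nM4_nonneg μ 0
        gcongr
    _ = _ := by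
        field_simp
        ring

lemma nu_gr (hμ : NInt μ) (hν : NInt (nuOf μ f)) (fc : Continuous f) (f0 : ∀ s, 0 ≤ f s)
    (fA : ∀ s, f s ≤ A) (f2 : Integrable (fun s => f s ^ 2)) (hA : 0 < A)
    (htop : Tendsto (nM2 μ) atTop atTop)
    (hT2 : Tendsto
      (fun ξ => (Real.log (max (levyM μ 4 ξ / levyM μ 2 ξ) 1)
        + Real.log (Real.log (levyM μ 2 ξ))) / ξ) atTop (nhds 0))
    (m : ℝ) (mp : 0 < m) (hm : ∀ x : ℝ, 0 ≤ x → m ≤ nM2 (nuOf μ f) x) :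
    ∀ ε > 0, ∃ C > 0, ∀ x : ℝ, 0 ≤ x →
      nM4 (nuOf μ f) x ≤ C * Real.exp (ε * x) * nM2 (nuOf μ f) x ∧
      nM2 (nuOf μ f) x ≤ C * Real.exp (C * Real.exp (ε * x)) := by
  intro ε εp
  have ep : 0 < ε / A := by positivity
  have ev : ∀ᶠ ξ in atTop, nM4 μ ξ ≤ Real.exp (ε / A * ξ) * nM2 μ ξ ∧
      nM2 μ ξ ≤ Real.exp (Real.exp (ε / A * ξ)) := by
    filter_upwards [hT2.eventually_lt_const ep, eventually_gt_atTop 0,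
      htop.eventually_ge_atTop (Real.exp 1)] with ξ h1 h2 h3
    rw [lev4, lev2, div_lt_iff₀ h2] at h1
    have Mp : 0 < nM2 μ ξ := (Real.exp_pos 1).trans_le h3
    have L1 : 1 ≤ Real.log (nM2 μ ξ) := (Real.le_log_iff_exp_le Mp).2 h3
    have LL := Real.log_nonneg L1
    have Lm : 0 ≤ Real.log (max (nM4 μ ξ / nM2 μ ξ) 1) := Real.log_nonneg (le_max_right _ _)
    constructor
    · have : max (nM4 μ ξ / nM2 μ ξ) 1 ≤ Real.exp (ε / A * ξ) :=
        (Real.log_le_iff_le_exp (by positivity)).1 (by linarith)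
      have := (le_max_left _ _).trans this
      rwa [div_le_iff₀ Mp] at this
    · rw [← Real.log_le_iff_le_exp Mp, ← Real.log_le_iff_le_exp (by linarith)]
      linarith
  obtain ⟨X, hX⟩ := eventually_atTop.1 ev
  set Ξ := max X 0
  set B4 := nM4 μ Ξ + nM4 μ 0
  set B2 := nM2 μ Ξ + nM2 μ 0
  have B40 : 0 ≤ B4 := add_nonneg (nM4_nonneg _ _) (nM4_nonneg _ _)
  have B20 : 0 ≤ B2 := add_nonneg (nM2_nonneg _ _) (nM2_nonneg _ _)
  have all4 : ∀ ξ : ℝ, 0 ≤ ξ → nM4 μ ξ ≤ Real.exp (ε / A * ξ) * nM2 μ ξ + B4 := by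
    intro ξ h
    have := mul_nonneg (Real.exp_pos (ε / A * ξ)).le (nM2_nonneg μ ξ)
    rcases le_total X ξ with h1 | h1
    · have := (hX ξ h1).1
      linarith
    · have := nM4_mono hμ ξ Ξ h (h1.trans (le_max_left _ _))
      linarith
  have all2 : ∀ ξ : ℝ, 0 ≤ ξ → nM2 μ ξ ≤ Real.exp (Real.exp (ε / A * ξ)) + B2 := by
    intro ξ h
    have := Real.exp_pos (Real.exp (ε / A * ξ))
    rcases le_total X ξ with h1 | h1
    · have := (hX ξ h1).2
      linarith
    · have := nM2_mono hμ ξ Ξ h (h1.trans (le_max_left _ _))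
      linarith
  set I4 := ∫ s, f s ^ 4 with hI4
  set I2 := ∫ s, f s ^ 2 with hI2
  have I40 : 0 ≤ I4 := integral_nonneg fun s => by positivity
  have I20 : 0 ≤ I2 := integral_nonneg fun s => by positivity
  have ea : ∀ s x : ℝ, 0 ≤ x → ε / A * (f s * x) ≤ ε * x := by
    intro s x hx
    calc ε / A * (f s * x) ≤ ε / A * (A * x) := by have := fA s; gcongr
      _ = ε * x := by field_simp
  set C := A ^ 2 + B4 * I4 / m + I2 * (1 + B2) + 1 with hC
  have c1 : 0 ≤ B4 * I4 / m := by positivity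
  have c2 : 0 ≤ I2 * (1 + B2) := by positivity
  have c3 : 0 ≤ A ^ 2 := by positivity
  refine ⟨C, by positivity, fun x hx => ⟨?_, ?_⟩⟩
  · have b : nM4 (nuOf μ f) x ≤ A ^ 2 * Real.exp (ε * x) * nM2 (nuOf μ f) x + B4 * I4 := by
      rw [nu_m4 hν fc, nu_m2 hν fc, kernelM, kernelM, hI4, ← integral_const_mul,
        ← integral_const_mul, ← integral_add ((nu_i2 hν fc x).const_mul _)
          ((f4_int fc f0 fA f2).const_mul _)]
      refine integral_mono (nu_i4 hν fc x) (((nu_i2 hν fc x).const_mul _).add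
          ((f4_int fc f0 fA f2).const_mul _)) fun s => ?_
      simp only [lev2, lev4]
      have h0 := f0 s
      have h1 := fA s
      have a := all4 (f s * x) (by positivity)
      have n2 := nM2_nonneg μ (f s * x)
      calc f s ^ 4 * nM4 μ (f s * x) ≤ f s ^ 4 * (Real.exp (ε * x) * nM2 μ (f s * x) + B4) := by
            gcongr
            refine a.trans ?_
            gcongr Real.exp ?_ * _ + _
            exact ea s x hx
        _ = f s ^ 2 * Real.exp (ε * x) * (f s ^ 2 * nM2 μ (f s * x)) + B4 * f s ^ 4 := by ring
        _ ≤ _ := by gcongr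
    have hm' := hm x hx
    have E1 : 1 ≤ Real.exp (ε * x) := Real.one_le_exp (by positivity)
    have n2 : 0 < nM2 (nuOf μ f) x := mp.trans_le hm'
    have d : B4 * I4 ≤ B4 * I4 / m * (Real.exp (ε * x) * nM2 (nuOf μ f) x) := by
      have : m ≤ Real.exp (ε * x) * nM2 (nuOf μ f) x := by nlinarith
      calc B4 * I4 = B4 * I4 / m * m := by field_simp
        _ ≤ _ := by gcongr
    calc _ ≤ (A ^ 2 + B4 * I4 / m) * (Real.exp (ε * x) * nM2 (nuOf μ f) x) := by linarith
      _ ≤ C * (Real.exp (ε * x) * nM2 (nuOf μ f) x) := by gcongr; linarith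
      _ = _ := by ring
  · have b : nM2 (nuOf μ f) x ≤ I2 * (Real.exp (Real.exp (ε * x)) + B2) := by
      rw [nu_m2 hν fc, kernelM, hI2, ← integral_mul_const]
      refine integral_mono (nu_i2 hν fc x) (f2.mul_const _) fun s => ?_
      simp only [lev2]
      have h0 := f0 s
      have a := all2 (f s * x) (by positivity)
      gcongr
      refine a.trans ?_
      gcongr Real.exp (Real.exp ?_) + _
      exact ea s x hx
    have E1 : 1 ≤ Real.exp (Real.exp (ε * x)) := Real.one_le_exp (by positivity)
    calc _ ≤ I2 * (Real.exp (Real.exp (ε * x)) + B2) := b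
      _ ≤ I2 * (1 + B2) * Real.exp (1 * Real.exp (ε * x)) := by
          rw [one_mul, mul_assoc]
          gcongr
          nlinarith
      _ ≤ _ := by
          gcongr
          · linarith
          · linarith
end


section
variable {μ : Measure ℝ} [SigmaFinite μ] {H : ℝ}

lemma good (hH : H ∈ Ioo (1/2 : ℝ) 1) (hμ : NInt μ) (hμpos : 0 < μ (Set.Ioi (0 : ℝ)))
    (γ : ℝ) (hγ : γ ∈ Set.Ioo (0 : ℝ) 1)
    (hT1 : Tendsto (fun ξ => levyM μ 4 ξ / (levyM μ 2 (γ * ξ)) ^ 2) atTop (nhds 0))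
    (hT2 : Tendsto
      (fun ξ => (Real.log (max (levyM μ 4 ξ / levyM μ 2 ξ) 1)
        + Real.log (Real.log (levyM μ 2 ξ))) / ξ) atTop (nhds 0)) :
    ∃ c1 c2 c3 β m : ℝ, NGood (nuOf μ (fracKernel H)) c1 c2 c3 β m := by
  have gp := fk_gam hH
  have fc := fk_cont hH
  have f0 := fk_nonneg hH
  have fA := fk_le hH
  have f2 := fk_sq_int hH
  have z0 := fk_zero hH
  set A := 1 / Real.Gamma (H + 1/2) with hA
  have Ap : 0 < A := by positivity
  have hν := nu_nint hμ fc f0 fA f2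
  obtain ⟨a, b, ha, _, hm⟩ := mu_pos hμpos
  obtain ⟨c1, c1p, c2, c2p, g1⟩ := G1 hH hμ hν a b ha hm
  obtain ⟨c3, c3p, g2⟩ := G2 hH hμ hν a b ha hm
  obtain ⟨m, mp, hM⟩ := MLB hH hμ hν a b ha hm
  have htop := nM2_top hμ a b ha hm
  obtain ⟨σ, σp, hσ⟩ : ∃ σ > 0, ∀ s ∈ Icc 0 σ, γ * A ≤ fracKernel H s := by
    have : γ * A < fracKernel H 0 := by
      rw [z0]; nlinarith [hγ.2]
    have := fc.continuousAt.eventually_const_lt this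
    obtain ⟨δ, δp, hδ⟩ := Metric.eventually_nhds_iff.1 this
    refine ⟨δ / 2, by positivity, fun s hs => (hδ ?_).le⟩
    rw [Real.dist_eq, sub_zero, abs_of_nonneg hs.1]
    linarith [hs.2]
  exact ⟨c1, c2, c3, 4 * (H - 1/2), m, ⟨hν, c1p, c2p, c3p, by linarith [hH.1], mp, g1, g2,
    nu_lim hμ hν fc f0 fA f2 Ap γ σ hγ.1 σp hσ htop hT1,
    nu_gr hμ hν fc f0 fA f2 Ap htop hT2 m mp (fun x hx => (hM x hx).1),
    fun x hx => (hM x hx).1, fun x hx => (hM x hx).2⟩⟩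

lemma psi_scale (hν : NInt (nuOf μ (fracKernel H))) (fc : Continuous (fracKernel H))
    (t : ℝ) (ht : 0 < t) (z : ℂ) :
    kernelPsi μ (fracKernelT H t) z =
      t * nPsi (nuOf μ (fracKernel H)) ((t ^ (H - 1/2) : ℝ) * z) := by
  rw [← nu_psi hν fc]
  unfold kernelPsi
  have := Measure.integral_comp_div (fun s => ∫ u, (Complex.exp (-(Complex.I *
    ((t ^ (H - 1/2) : ℝ) * z) * ((fracKernel H s * u : ℝ) : ℂ))) - 1
    + Complex.I * ((t ^ (H - 1/2) : ℝ) * z) * ((fracKernel H s * u : ℝ) : ℂ)) ∂μ) t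
  rw [abs_of_pos ht, Complex.real_smul] at this
  rw [← this]
  congr 1
  ext s
  congr 1
  ext u
  rw [fk_scale t s ht]
  push_cast
  ring_nf
end

lemma nPsi_real {ν : Measure ℝ} (hν : NInt ν) (w : ℝ) : nPsi ν (w : ℂ) = nTh ν w 0 := by
  have := nPsi_shift hν w 0
  simpa [nM0, nM1] using this

lemma zeta_inf {ν : Measure ℝ} (hν : NInt ν) (ζ : ℝ → ℝ) (h t0 : ℝ) (hh : 0 < h) (ht0 : 0 < t0)
    (hζ : ∀ y : ℝ, 0 ≤ y → 0 ≤ ζ y ∧ nM1 ν (ζ y) = y) :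
    Tendsto (fun p : ℝ × ℝ => p.1 + ζ (p.2 / p.1 ^ h))
      (comap (fun p : ℝ × ℝ => p.1 + p.2) atTop ⊓ 𝓟 {p | t0 ≤ p.1 ∧ 0 ≤ p.2}) atTop := by
  rw [tendsto_atTop]
  intro B
  rw [eventually_inf_principal, eventually_comap]
  filter_upwards [eventually_ge_atTop (B + nM1 ν B * B ^ h)] with r hr
  rintro ⟨t, x⟩ rfl ⟨ht, hx⟩
  simp only at ht hx hr ⊢
  have tp : 0 < t := ht0.trans_le ht
  have yp : 0 ≤ x / t ^ h := by positivity
  obtain ⟨z0, z1⟩ := hζ _ yp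
  by_contra! hcon
  have tB : t < B := by linarith
  have zB : ζ (x / t ^ h) ≤ B := by linarith
  have m := nM1_le hν _ _ zB
  rw [z1] at m
  have th : t ^ h ≤ B ^ h := Real.rpow_le_rpow tp.le tB.le hh.le
  have : x ≤ nM1 ν B * B ^ h := by
    calc x = x / t ^ h * t ^ h := by field_simp
      _ ≤ _ := mul_le_mul m th (by positivity) (yp.trans m)
  linarith

/-- Corollary 4.1, statement (2); relation (answ42): the distribution density
of the fractional Lévy motion with Hurst index `H ∈ (1/2,1)` satisfies
`p_t(x) ∼ (2πt^{2H}𝒦_H(x/t^{H+1/2}))^{−1/2} e^{t𝒟_H(x/t^{H+1/2})}` as `t + x → ∞`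
over `[t₀,∞) × [0,∞)`. -/
theorem fracLevy_density_asymptotics
    (μ : Measure ℝ)
    (hμ0 : μ {0} = 0)
    (hμint : Integrable (fun u : ℝ => min 1 (u ^ 2)) μ)
    (hμpos : 0 < μ (Set.Ioi (0 : ℝ)))
    (hμexp : ∀ C : ℝ, Integrable (fun u : ℝ => Real.exp (C * u)) (μ.restrict {u : ℝ | 1 ≤ |u|}))
    (γ : ℝ) (hγ : γ ∈ Set.Ioo (0 : ℝ) 1)
    (hT1 : Tendsto (fun ξ => levyM μ 4 ξ / (levyM μ 2 (γ * ξ)) ^ 2) atTop (nhds 0))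
    (hT2 : Tendsto
      (fun ξ => (Real.log (max (levyM μ 4 ξ / levyM μ 2 ξ) 1)
        + Real.log (Real.log (levyM μ 2 ξ))) / ξ) atTop (nhds 0))
    (H : ℝ) (hH : H ∈ Set.Ioo (1/2 : ℝ) 1)
    (ζ : ℝ → ℝ)
    (hζ : ∀ y : ℝ, 0 ≤ y → 0 ≤ ζ y ∧ kernelM μ (fracKernel H) 1 (ζ y) = y)
    (𝒟 𝒦 : ℝ → ℝ)
    (h𝒟 : ∀ y : ℝ, 𝒟 y = -(y * ζ y) + kernelM μ (fracKernel H) 0 (ζ y))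
    (h𝒦 : ∀ y : ℝ, 𝒦 y = kernelM μ (fracKernel H) 2 (ζ y))
    (p : ℝ → ℝ → ℝ)
    (hp : ∀ t x : ℝ, p t x = (1 / (2 * Real.pi)) *
      (∫ z : ℝ, Complex.exp (Complex.I * (x : ℂ) * (z : ℂ)
        + kernelPsi μ (fracKernelT H t) (z : ℂ))).re) :
    (∀ t > (0 : ℝ), ∀ x : ℝ,
      Integrable (fun z : ℝ => Complex.exp (Complex.I * (x : ℂ) * (z : ℂ)
        + kernelPsi μ (fracKernelT H t) (z : ℂ))))
    ∧ ∀ t₀ > (0 : ℝ), ∀ ε > (0 : ℝ), ∃ N : ℝ, ∀ t x : ℝ,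
        t₀ ≤ t → 0 ≤ x → N ≤ t + x →
        |p t x * Real.sqrt (2 * Real.pi * t ^ (2 * H) * 𝒦 (x / t ^ (H + 1/2)))
          * Real.exp (-(t * 𝒟 (x / t ^ (H + 1/2)))) - 1| < ε := by
  have := mu_sf hμ0 hμint
  have hμ := mu_nint hμint hμexp
  obtain ⟨c1, c2, c3, β, m, hg⟩ := good (H := H) hH hμ hμpos γ hγ hT1 hT2
  have fc := fk_cont hH
  have hν := hg.int
  set ν := nuOf μ (fracKernel H) with hνd
  have h1 := hH.1
  have e0 : ∀ x, kernelM μ (fracKernel H) 0 x = nM0 ν x := nu_m0 hν fc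
  have e1 : ∀ x, kernelM μ (fracKernel H) 1 x = nM1 ν x := nu_m1 hν fc
  have e2 : ∀ x, kernelM μ (fracKernel H) 2 x = nM2 ν x := fun x => (nu_m2 hν fc x).symm
  simp only [e0, e1, e2] at hζ h𝒟 h𝒦
  have eP : ∀ t > (0:ℝ), ∀ z : ℝ, kernelPsi μ (fracKernelT H t) (z : ℂ) =
      t * nPsi ν ((t ^ (H - 1/2) * z : ℝ) : ℂ) := by
    intro t ht z
    rw [psi_scale hν fc t ht]
    push_cast
    rfl
  constructor
  · intro t ht x
    have q : 0 < t ^ (H - 1/2) := by positivity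
    have i := (hg.h_int t 0 ht le_rfl).comp_mul_left' q.ne'
    refine (i.bdd_mul (c := 1) (f := fun z : ℝ => Complex.exp (Complex.I * x * z))
      (by fun_prop) (Eventually.of_forall fun z => ?_)).congr (Eventually.of_forall fun z => ?_)
    · rw [Complex.norm_exp]
      simp
    · simp only
      rw [eP t ht, nPsi_real hν, Complex.exp_add]
  intro t₀ ht₀ ε hε
  set l := comap (fun p : ℝ × ℝ => p.1 + p.2) atTop ⊓ 𝓟 {p | t₀ ≤ p.1 ∧ 0 ≤ p.2} with hl
  have hin : ∀ᶠ p : ℝ × ℝ in l, t₀ ≤ p.1 ∧ 0 ≤ p.2 := by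
    rw [hl, eventually_inf_principal]
    exact Eventually.of_forall fun p hp => hp
  have inf := zeta_inf hν ζ (H + 1/2) t₀ (by linarith) ht₀ hζ
  have hx : ∀ᶠ p : ℝ × ℝ in l, 0 ≤ ζ (p.2 / p.1 ^ (H + 1/2)) := by
    filter_upwards [hin] with p hp
    have : 0 < p.1 := ht₀.trans_le hp.1
    exact (hζ _ (div_nonneg hp.2 (by positivity))).1
  have M := hg.main (l := l) (fun p : ℝ × ℝ => p.1) (fun p => ζ (p.2 / p.1 ^ (H + 1/2))) t₀ ht₀
    (hin.mono fun p hp => hp.1) hx inf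
  have M2 := (Complex.continuous_re.tendsto _).comp M
  rw [Complex.ofReal_re] at M2
  have M3 := M2.div_const (Real.sqrt (2 * Real.pi))
  have s2p : 0 < Real.sqrt (2 * Real.pi) := Real.sqrt_pos.2 (by positivity)
  rw [div_self s2p.ne'] at M3
  have key : ∀ᶠ p' : ℝ × ℝ in l, |p p'.1 p'.2 * Real.sqrt (2 * Real.pi * p'.1 ^ (2 * H) *
      𝒦 (p'.2 / p'.1 ^ (H + 1/2))) * Real.exp (-(p'.1 * 𝒟 (p'.2 / p'.1 ^ (H + 1/2)))) - 1| < ε := by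
    have := (Metric.tendsto_nhds.1 M3) ε hε
    filter_upwards [this, hin] with p' hd hp'
    obtain ⟨t, x⟩ := p'
    simp only [Function.comp, Real.dist_eq] at hd hp' ⊢
    obtain ⟨ht, hx⟩ := hp'
    have tp : 0 < t := ht₀.trans_le ht
    have yp : 0 ≤ x / t ^ (H + 1/2) := by positivity
    obtain ⟨z0, z1⟩ := hζ _ yp
    set y := x / t ^ (H + 1/2) with hy
    set q := t ^ (H - 1/2) with hq
    have qp : 0 < q := by positivity
    have tq : t ^ (H + 1/2) = t * q := by
      rw [hq, ← Real.rpow_one_add' tp.le (by linarith)]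
      congr 1; ring
    have xe : x = t * y * q := by
      rw [hy, tq]; field_simp
    have t2 : t ^ (2 * H) = q ^ 2 * t := by
      rw [hq, ← Real.rpow_natCast, ← Real.rpow_mul tp.le, ← Real.rpow_add_one tp.ne']
      congr 1; push_cast; ring
    set J := ∫ w : ℝ, Complex.exp ((t : ℂ) * nTh ν w (ζ y)) with hJ
    have C := hg.contour t (ζ y) tp z0
    rw [z1, ← h𝒟, ← hJ] at C
    have I : ∫ z : ℝ, Complex.exp (Complex.I * (x : ℂ) * (z : ℂ)
        + kernelPsi μ (fracKernelT H t) (z : ℂ)) = ((q⁻¹ * Real.exp (t * 𝒟 y) : ℝ) : ℂ) * J := by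
      have sc := Measure.integral_comp_mul_left
        (fun w : ℝ => Complex.exp ((t : ℂ) * (Complex.I * y * w + nPsi ν w))) q
      rw [C, abs_of_pos (inv_pos.2 qp), Complex.real_smul] at sc
      push_cast at sc ⊢
      rw [mul_assoc, ← sc]
      congr 1
      ext z
      rw [eP t tp, xe]
      congr 1
      push_cast
      ring
    have fin : p t x * Real.sqrt (2 * Real.pi * t ^ (2 * H) * 𝒦 y) * Real.exp (-(t * 𝒟 y)) =
        ((Real.sqrt (t * nM2 ν (ζ y)) : ℂ) * J).re / Real.sqrt (2 * Real.pi) := by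
      rw [hp, I, Complex.re_ofReal_mul, Complex.re_ofReal_mul, t2, h𝒦]
      have s1 : Real.sqrt (2 * Real.pi * (q ^ 2 * t) * nM2 ν (ζ y)) =
          Real.sqrt (2 * Real.pi) * q * Real.sqrt (t * nM2 ν (ζ y)) := by
        have : 2 * Real.pi * (q ^ 2 * t) * nM2 ν (ζ y) =
          (2 * Real.pi) * q ^ 2 * (t * nM2 ν (ζ y)) := by ring
        rw [this, Real.sqrt_mul (by positivity), Real.sqrt_mul (by positivity), Real.sqrt_sq qp.le]
      have s3 : 2 * Real.pi = Real.sqrt (2 * Real.pi) ^ 2 := (Real.sq_sqrt (by positivity)).symm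
      rw [s1, Real.exp_neg]
      have ep := Real.exp_pos (t * 𝒟 y)
      have pp := Real.pi_pos
      set Q := Real.sqrt (2 * Real.pi)
      rw [s3]
      field_simp
    rw [fin]
    exact hd
  rw [hl, eventually_inf_principal, eventually_comap, eventually_atTop] at key
  obtain ⟨N, hN⟩ := key
  exact ⟨N, fun t x ht hx hn => hN (t + x) hn (t, x) rfl ⟨ht, hx⟩⟩
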